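/- Let n ≥ 1, R > 0 and Ω = B(0,R) ⊂ ℝⁿ. Assume the standing hypotheses on f and V, with f moreover of class C² and convex on [0,∞), and with any exponent p > 1. Assume V is radially symmetric (V(x) depends only on |x|). Let T > 0 and let u be a nonnegative classical solution of u_t = Δu + V(x)f(u) on (0,T)×Ω such that ∂_t u ≥ 0 everywhere and u is radially symmetric (u(t,x) depends only on t and |x|). Let x₀ ∈ Ω satisfy V(x₀) = 0 and assume that the connected component of the zero set {x ∈ closure(Ω) : V(x) = 0} containing x₀ does not intersect ∂Ω. Then x₀ is not a blowup point of u; that is, there exist r > 0 and M > 0 such that u(t,x) ≤ M for all t ∈ (T/2,T) and all x ∈ Ω with |x−x₀| < r. -/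

import Mathlib

open Set Metric Filter

noncomputable def lap {n : ℕ} (g : EuclideanSpace ℝ (Fin n) → ℝ)
    (x : EuclideanSpace ℝ (Fin n)) : ℝ :=
  ∑ i : Fin n, fderiv ℝ (fun y => fderiv ℝ g y (EuclideanSpace.single i 1)) x
    (EuclideanSpace.single i 1)

/-!
If `u_t` is not identically zero, comparing the increments `u(t + s, x) - u(t, x)` with bumps whose
support expands linearly shows that `u_t` is bounded below by a positive constant on compact
subsets of `Ω` for times near `T`. Since the component of `x₀` in the zero set of `V` stays inside
`Ω`, the point `x₀` has a compact neighbourhood `K ⊆ Ω` with `V > 0` on `∂K`. Take a cutoff `χ`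
equal to `1` on `K` whose gradient lives where `V > 0`. For every `q < p` and small `δ`, the
Friedman–McLeod function `u_t - δ χᵏ u^q` then stays nonnegative: the errors produced by the cutoff
are absorbed by the positive term `V (u f'(u) - q f(u)) ≥ c V u^p`. Integrating `u_t ≥ δ u^q`
gives `u ≤ C (T - t) ^ (-1 / (q - 1))` on `K`, a rate arbitrarily close to the self-similar one.
As `V = O(|x - x₀|^β)`, the reaction is too weak near `x₀` to sustain that rate, and an explicit
supersolution, equal to this rate on the parabolic boundary of a small cylinder but bounded near
`x₀`, bounds `u` there.
-/

open scoped Topology Gradient Laplacian RealInnerProductSpace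

section Laplacian

variable {E : Type*} [NormedAddCommGroup E] [InnerProductSpace ℝ E]
  {g h : E → ℝ} {φ : ℝ → ℝ} {x y : E}

theorem differentiableAt_fderiv_apply (hg : ContDiffAt ℝ 2 g x) (v : E) :
    DifferentiableAt ℝ (fun y ↦ fderiv ℝ g y v) x :=
  ((hg.fderiv_right (m := 1) (by norm_num)).differentiableAt one_ne_zero).clm_apply
    (differentiableAt_const v)

theorem eventually_differentiableAt (hg : ContDiffAt ℝ 2 g x) :
    ∀ᶠ y in 𝓝 x, DifferentiableAt ℝ g y :=
  (hg.eventually (by simp)).mono fun _ hy ↦ hy.differentiableAt two_ne_zero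

variable [FiniteDimensional ℝ E]

theorem laplacian_eq_sum_fderiv {ι : Type*} [Fintype ι] (v : OrthonormalBasis ι ℝ E)
    (hg : ContDiffAt ℝ 2 g x) :
    Δ g x = ∑ i, fderiv ℝ (fun y ↦ fderiv ℝ g y (v i)) x (v i) := by
  have hd : DifferentiableAt ℝ (fderiv ℝ g) x :=
    (hg.fderiv_right (m := 1) (by norm_num)).differentiableAt one_ne_zero
  rw [InnerProductSpace.laplacian_eq_iteratedFDeriv_orthonormalBasis g v]
  refine Finset.sum_congr rfl fun i _ ↦ ?_
  rw [iteratedFDeriv_two_apply, fderiv_clm_apply hd (differentiableAt_const _)]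
  simp

theorem lap_eq_laplacian {n : ℕ} {g : EuclideanSpace ℝ (Fin n) → ℝ}
    {x : EuclideanSpace ℝ (Fin n)} (hg : ContDiffAt ℝ 2 g x) : lap g x = Δ g x := by
  rw [laplacian_eq_sum_fderiv (EuclideanSpace.basisFun (Fin n) ℝ) hg]
  simp only [EuclideanSpace.basisFun_apply, lap]

theorem sum_fderiv_mul_fderiv {ι : Type*} [Fintype ι] (v : OrthonormalBasis ι ℝ E) :
    ∑ i, fderiv ℝ g x (v i) * fderiv ℝ h x (v i) = ⟪∇ g x, ∇ h x⟫ := by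
  simp only [← inner_gradient_left, ← v.sum_inner_mul_inner (∇ g x) (∇ h x),
    real_inner_comm (∇ h x)]

theorem continuousAt_laplacian (hg : ContDiffAt ℝ 2 g x) : ContinuousAt (Δ g) x := by
  rw [InnerProductSpace.laplacian_eq_iteratedFDeriv_stdOrthonormalBasis]
  refine tendsto_finsetSum _ fun i _ ↦ ?_
  exact (hg.continuousAt_iteratedFDeriv le_rfl).eval_const _

theorem laplacian_const_mul (c : ℝ) (hg : ContDiffAt ℝ 2 g x) :
    Δ (fun y ↦ c * g y) x = c * Δ g x :=
  InnerProductSpace.laplacian_smul c hg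

theorem laplacian_mul (hg : ContDiffAt ℝ 2 g x) (hh : ContDiffAt ℝ 2 h x) :
    Δ (fun y ↦ g y * h y) x = h x * Δ g x + 2 * ⟪∇ g x, ∇ h x⟫ + g x * Δ h x := by
  set v := stdOrthonormalBasis ℝ E
  have hterm : ∀ i, fderiv ℝ (fun y ↦ fderiv ℝ (fun z ↦ g z * h z) y (v i)) x (v i)
      = h x * fderiv ℝ (fun y ↦ fderiv ℝ g y (v i)) x (v i)
        + 2 * (fderiv ℝ g x (v i) * fderiv ℝ h x (v i))
        + g x * fderiv ℝ (fun y ↦ fderiv ℝ h y (v i)) x (v i) := by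
    intro i
    have hfirst : (fun y ↦ fderiv ℝ (fun z ↦ g z * h z) y (v i)) =ᶠ[𝓝 x]
        fun y ↦ g y * fderiv ℝ h y (v i) + h y * fderiv ℝ g y (v i) := by
      filter_upwards [eventually_differentiableAt hg, eventually_differentiableAt hh] with y hy hy'
      simp [fderiv_fun_mul hy hy']
    have hgx := hg.differentiableAt two_ne_zero
    have hhx := hh.differentiableAt two_ne_zero
    have hgx' := differentiableAt_fderiv_apply hg (v i)
    have hhx' := differentiableAt_fderiv_apply hh (v i)
    rw [hfirst.fderiv_eq, fderiv_fun_add (hgx.fun_mul hhx') (hhx.fun_mul hgx'),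
      fderiv_fun_mul hgx hhx', fderiv_fun_mul hhx hgx']
    simp only [add_apply, smul_apply, smul_eq_mul]
    ring
  rw [laplacian_eq_sum_fderiv v (hg.mul hh), Finset.sum_congr rfl fun i _ ↦ hterm i,
    Finset.sum_add_distrib, Finset.sum_add_distrib, ← Finset.mul_sum, ← Finset.mul_sum,
    ← Finset.mul_sum, sum_fderiv_mul_fderiv, laplacian_eq_sum_fderiv v hg,
    laplacian_eq_sum_fderiv v hh]

theorem laplacian_comp (hφ : ContDiffAt ℝ 2 φ (g x)) (hg : ContDiffAt ℝ 2 g x) :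
    Δ (fun y ↦ φ (g y)) x
      = deriv (deriv φ) (g x) * ‖∇ g x‖ ^ 2 + deriv φ (g x) * Δ g x := by
  set v := stdOrthonormalBasis ℝ E
  have hgx := hg.differentiableAt two_ne_zero
  have hφ' : DifferentiableAt ℝ (deriv φ) (g x) := by
    exact differentiableAt_fderiv_apply hφ 1
  have hterm : ∀ i, fderiv ℝ (fun y ↦ fderiv ℝ (fun z ↦ φ (g z)) y (v i)) x (v i)
      = deriv (deriv φ) (g x) * (fderiv ℝ g x (v i) * fderiv ℝ g x (v i))
        + deriv φ (g x) * fderiv ℝ (fun y ↦ fderiv ℝ g y (v i)) x (v i) := by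
    intro i
    have hfirst : (fun y ↦ fderiv ℝ (fun z ↦ φ (g z)) y (v i)) =ᶠ[𝓝 x]
        fun y ↦ deriv φ (g y) * fderiv ℝ g y (v i) := by
      filter_upwards [eventually_differentiableAt hg,
        hg.continuousAt.eventually (eventually_differentiableAt hφ)] with y hy hy'
      have := (hy'.hasDerivAt.comp_hasFDerivAt y hy.hasFDerivAt).fderiv
      simp only [Function.comp_def] at this
      simp [this]
    have hcomp : HasFDerivAt (fun y ↦ deriv φ (g y)) (deriv (deriv φ) (g x) • fderiv ℝ g x) x :=
      hφ'.hasDerivAt.comp_hasFDerivAt x hgx.hasFDerivAt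
    rw [hfirst.fderiv_eq,
      (hcomp.fun_mul (differentiableAt_fderiv_apply hg (v i)).hasFDerivAt).fderiv]
    simp only [add_apply, smul_apply, smul_eq_mul]
    ring
  rw [laplacian_eq_sum_fderiv v (hφ.fun_comp x hg), Finset.sum_congr rfl fun i _ ↦ hterm i,
    Finset.sum_add_distrib, ← Finset.mul_sum, ← Finset.mul_sum, sum_fderiv_mul_fderiv,
    real_inner_self_eq_norm_sq, laplacian_eq_sum_fderiv v hg]

theorem laplacian_rpow (q : ℝ) (hg : ContDiffAt ℝ 2 g x) (hx : 0 < g x) :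
    Δ (fun y ↦ g y ^ q) x
      = q * (q - 1) * g x ^ (q - 2) * ‖∇ g x‖ ^ 2 + q * g x ^ (q - 1) * Δ g x := by
  have hd : ∀ r, ∀ s > 0, HasDerivAt (fun s : ℝ ↦ s ^ r) (r * s ^ (r - 1)) s :=
    fun r s hs ↦ Real.hasDerivAt_rpow_const (Or.inl hs.ne')
  have h1 : deriv (fun s : ℝ ↦ s ^ q) =ᶠ[𝓝 (g x)] fun s ↦ q * s ^ (q - 1) := by
    filter_upwards [lt_mem_nhds hx] with s hs using (hd q s hs).deriv
  rw [laplacian_comp (Real.contDiffAt_rpow_const_of_ne hx.ne') hg, h1.deriv_eq, h1.self_of_nhds,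
    ((hd (q - 1) _ hx).const_mul q).deriv, show q - 1 - 1 = q - 2 by ring]
  ring

theorem gradient_norm_sub_sq (y x : E) : ∇ (fun z : E ↦ ‖z - y‖ ^ 2) x = (2 : ℝ) • (x - y) := by
  refine HasGradientAt.gradient ?_
  have h := ((hasFDerivAt_id x).sub_const y).norm_sq
  refine h.congr_fderiv ?_
  ext w
  simp [two_smul]

theorem fderiv_norm_sub_sq_apply (y x v : E) :
    fderiv ℝ (fun z : E ↦ ‖z - y‖ ^ 2) x v = 2 * ⟪x - y, v⟫ := by
  rw [← inner_gradient_left, gradient_norm_sub_sq, real_inner_smul_left]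

theorem laplacian_norm_sub_sq (y x : E) :
    Δ (fun z : E ↦ ‖z - y‖ ^ 2) x = 2 * Module.finrank ℝ E := by
  have hC : ContDiffAt ℝ 2 (fun z : E ↦ ‖z - y‖ ^ 2) x :=
    (contDiffAt_id.sub contDiffAt_const).norm_sq ℝ
  have hterm : ∀ i, fderiv ℝ (fun z ↦ 2 * ⟪z - y, stdOrthonormalBasis ℝ E i⟫) x
      (stdOrthonormalBasis ℝ E i) = 2 := by
    intro i
    have h := (((hasFDerivAt_id x).sub_const y).inner ℝ
      (hasFDerivAt_const (stdOrthonormalBasis ℝ E i) x)).const_mul 2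
    simp only [id_eq] at h
    simp [h.fderiv]
  simp_rw [laplacian_eq_sum_fderiv (stdOrthonormalBasis ℝ E) hC, fderiv_norm_sub_sq_apply, hterm]
  simp [mul_comm]

theorem laplacian_comp_norm_sub_sq (hφ : ContDiffAt ℝ 2 φ (‖x - y‖ ^ 2)) :
    Δ (fun z : E ↦ φ (‖z - y‖ ^ 2)) x = 4 * ‖x - y‖ ^ 2 * deriv (deriv φ) (‖x - y‖ ^ 2)
      + 2 * Module.finrank ℝ E * deriv φ (‖x - y‖ ^ 2) := by
  rw [laplacian_comp (g := fun z : E ↦ ‖z - y‖ ^ 2) hφ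
    ((contDiffAt_id.sub contDiffAt_const).norm_sq ℝ), gradient_norm_sub_sq,
    laplacian_norm_sub_sq, norm_smul]
  simp only [Real.norm_ofNat]
  ring

theorem deriv_deriv_nonneg_of_isLocalMin {φ : ℝ → ℝ} {a : ℝ} (hmin : IsLocalMin φ a)
    (hφ : ContinuousAt φ a) : 0 ≤ deriv (deriv φ) a := by
  by_contra! hneg
  have hmax : IsLocalMax φ a := isLocalMax_of_deriv_deriv_neg hneg hmin.deriv_eq_zero hφ
  have hconst : φ =ᶠ[𝓝 a] fun _ ↦ φ a := by
    filter_upwards [hmin, hmax] with s h₁ h₂ using le_antisymm h₂ h₁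
  rw [hconst.deriv.deriv_eq] at hneg
  simp at hneg

theorem laplacian_nonneg_of_isLocalMin (hmin : IsLocalMin g x) (hg : ContDiffAt ℝ 2 g x) :
    0 ≤ Δ g x := by
  set v := stdOrthonormalBasis ℝ E
  rw [laplacian_eq_sum_fderiv v hg]
  refine Finset.sum_nonneg fun i _ ↦ ?_
  have hline : ∀ s : ℝ, HasDerivAt (fun s : ℝ ↦ x + s • v i) (v i) s := fun s ↦ by
    simpa using ((hasDerivAt_id s).smul_const (v i)).const_add x
  have hzero : x + (0 : ℝ) • v i = x := by simp
  have htend : Tendsto (fun s : ℝ ↦ x + s • v i) (𝓝 0) (𝓝 x) := by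
    simpa only [hzero] using (hline 0).continuousAt.tendsto
  have hfirst : deriv (fun s : ℝ ↦ g (x + s • v i)) =ᶠ[𝓝 0]
      fun s ↦ fderiv ℝ g (x + s • v i) (v i) := by
    filter_upwards [htend.eventually (eventually_differentiableAt hg)] with s hs
    exact (hs.hasFDerivAt.comp_hasDerivAt s (hline s)).deriv
  have hsecond : deriv (deriv fun s : ℝ ↦ g (x + s • v i)) 0
      = fderiv ℝ (fun y ↦ fderiv ℝ g y (v i)) x (v i) := by
    have hd := (differentiableAt_fderiv_apply hg (v i)).hasFDerivAt
    rw [← hzero] at hd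
    have hcomp := hd.comp_hasDerivAt (0 : ℝ) (hline 0)
    rw [hzero] at hcomp
    exact hfirst.deriv_eq.trans hcomp.deriv
  rw [← hsecond]
  refine deriv_deriv_nonneg_of_isLocalMin ?_ ?_
  · simpa only [IsLocalMin, IsMinFilter, hzero] using htend.eventually hmin
  · exact ContinuousAt.comp (g := g) (by simpa only [hzero] using hg.continuousAt)
      (hline 0).continuousAt

end Laplacian

section Comparison

theorem nonpos_of_hasDerivAt_of_eventually_le {φ : ℝ → ℝ} {φ' t : ℝ} (hφ : HasDerivAt φ φ' t)
    (hle : ∀ᶠ s in 𝓝[<] t, φ t ≤ φ s) : φ' ≤ 0 := by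
  refine le_of_tendsto ((hasDerivWithinAt_iff_tendsto_slope' self_notMem_Iio).1
    hφ.hasDerivWithinAt) ?_
  filter_upwards [hle, self_mem_nhdsWithin] with s hs hst
  rw [slope_def_field]
  exact div_nonpos_of_nonneg_of_nonpos (sub_nonneg.2 hs) (sub_nonpos.2 (mem_Iio.1 hst).le)

variable {E : Type*} [NormedAddCommGroup E] [InnerProductSpace ℝ E] [FiniteDimensional ℝ E]

theorem nonneg_of_parabolic_supersolution {W : Set (ℝ × E)} {J : ℝ → E → ℝ} {a b L : ℝ}
    (hW : IsCompact (Prod.fst ⁻¹' Icc a b ∩ W))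
    (hJ : ContinuousOn (Function.uncurry J) (Prod.fst ⁻¹' Icc a b ∩ W))
    (hinit : ∀ x, (a, x) ∈ W → 0 ≤ J a x)
    (hbdry : ∀ t ∈ Icc a b, ∀ x, (t, x) ∈ frontier W → 0 ≤ J t x)
    (hint : ∀ t ∈ Ioc a b, ∀ x, (t, x) ∈ interior W → J t x < 0 →
      ContDiffAt ℝ 2 (J t) x ∧
        ∃ J', HasDerivAt (fun s ↦ J s x) J' t ∧ L * J t x < J' - Δ (J t) x) :
    ∀ t ∈ Icc a b, ∀ x, (t, x) ∈ W → 0 ≤ J t x := by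
  intro t₁ ht₁ x₁ hx₁
  have hcont : ContinuousOn (fun z : ℝ × E ↦ Real.exp (-L * z.1) * J z.1 z.2)
      (Prod.fst ⁻¹' Icc a b ∩ W) :=
    ContinuousOn.mul (by fun_prop) hJ
  obtain ⟨⟨t, x⟩, ⟨ht, hx⟩, hmin⟩ := hW.exists_isMinOn ⟨(t₁, x₁), ht₁, hx₁⟩ hcont
  replace hmin : ∀ s ∈ Icc a b, ∀ y, (s, y) ∈ W →
      Real.exp (-L * t) * J t x ≤ Real.exp (-L * s) * J s y := fun s hs y hy ↦ hmin ⟨hs, hy⟩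
  suffices hmin_nonneg : 0 ≤ J t x from
    (mul_nonneg_iff_of_pos_left (Real.exp_pos _)).1
      ((mul_nonneg (Real.exp_pos _).le hmin_nonneg).trans (hmin t₁ ht₁ x₁ hx₁))
  by_contra! hneg
  replace ht : t ∈ Icc a b := ht
  have hat : a < t := by
    refine ht.1.lt_of_ne ?_
    rintro rfl
    exact hneg.not_ge (hinit x hx)
  have hx_int : (t, x) ∈ interior W := by
    by_contra hx'
    exact hneg.not_ge (hbdry t ht x ⟨subset_closure hx, hx'⟩)
  have hnear : ∀ᶠ z in 𝓝 (t, x), z ∈ W := mem_interior_iff_mem_nhds.1 hx_int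
  obtain ⟨hC, J', hJ', hlt⟩ := hint t ⟨hat, ht.2⟩ x hx_int hneg
  have hspace : 0 ≤ Δ (J t) x := by
    refine laplacian_nonneg_of_isLocalMin ?_ hC
    filter_upwards [(Continuous.prodMk_right t).continuousAt.eventually hnear] with y hy
    exact le_of_mul_le_mul_left (hmin t ht y hy) (Real.exp_pos _)
  have hexp : HasDerivAt (fun s ↦ Real.exp (-L * s)) (Real.exp (-L * t) * -L) t := by
    simpa using ((hasDerivAt_id t).const_mul (-L)).exp
  have htime : Real.exp (-L * t) * -L * J t x + Real.exp (-L * t) * J' ≤ 0 := by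
    refine nonpos_of_hasDerivAt_of_eventually_le (hexp.mul hJ') ?_
    filter_upwards [Ioo_mem_nhdsLT hat, nhdsWithin_le_nhds
      ((Continuous.prodMk_left x).continuousAt.eventually hnear)] with s hs hsW
    exact hmin s ⟨hs.1.le, hs.2.le.trans ht.2⟩ x hsW
  have : Real.exp (-L * t) * (J' - L * J t x) ≤ 0 := by linarith
  have := nonpos_of_mul_nonpos_right this (Real.exp_pos _)
  linarith

theorem nonneg_of_parabolic_supersolution_cylinder {A : Set E} {J : ℝ → E → ℝ} {a b L : ℝ}
    (hA : IsCompact A) (hJ : ContinuousOn (Function.uncurry J) (Icc a b ×ˢ A))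
    (hinit : ∀ x ∈ A, 0 ≤ J a x) (hbdry : ∀ t ∈ Icc a b, ∀ x ∈ frontier A, 0 ≤ J t x)
    (hint : ∀ t ∈ Ioc a b, ∀ x ∈ interior A, J t x < 0 →
      ContDiffAt ℝ 2 (J t) x ∧
        ∃ J', HasDerivAt (fun s ↦ J s x) J' t ∧ L * J t x < J' - Δ (J t) x) :
    ∀ t ∈ Icc a b, ∀ x ∈ A, 0 ≤ J t x := by
  have hprod : Prod.fst ⁻¹' Icc a b ∩ (univ : Set ℝ) ×ˢ A = Icc a b ×ˢ A := by
    rw [← prod_univ, prod_inter_prod, inter_univ, univ_inter]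
  have hmax := nonneg_of_parabolic_supersolution (W := (univ : Set ℝ) ×ˢ A) (J := J) (L := L)
    (hprod ▸ isCompact_Icc.prod hA) (hprod ▸ hJ) (fun x hx ↦ hinit x hx.2)
    (fun t ht x hx ↦ hbdry t ht x (by rw [frontier_univ_prod_eq] at hx; exact hx.2))
    (fun t ht x hx ↦ hint t ht x (by rw [interior_prod_eq] at hx; exact hx.2))
  exact fun t ht x hx ↦ hmax t ht x ⟨mem_univ t, hx⟩

end Comparison

theorem continuousAt_uncurry_of_monotoneOn {X : Type*} [TopologicalSpace X] {u : ℝ → X → ℝ}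
    {I : Set ℝ} {t : ℝ} {x : X} (hI : I ∈ 𝓝 t) (hmono : ∀ᶠ y in 𝓝 x, MonotoneOn (u · y) I)
    (htime : ContinuousAt (u · x) t) (hspace : ∀ s ∈ I, ContinuousAt (u s) x) :
    ContinuousAt (Function.uncurry u) (t, x) := by
  refine tendsto_order.2 ⟨fun a ha ↦ ?_, fun a ha ↦ ?_⟩
  · have hlt : ∀ᶠ s in 𝓝 t, a < u s x ∧ s ∈ I := (htime.eventually (lt_mem_nhds ha)).and hI
    obtain ⟨s, ⟨hs, hsI⟩, hst⟩ :=
      ((hlt.filter_mono nhdsWithin_le_nhds).and (self_mem_nhdsWithin (s := Iio t))).exists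
    rw [nhds_prod_eq]
    filter_upwards [((lt_mem_nhds hst).and hI).prod_mk
      (hmono.and ((hspace s hsI).eventually (lt_mem_nhds hs)))] with z ⟨⟨hz, hzI⟩, hm, hzs⟩
    exact hzs.trans_le (hm hsI hzI hz.le)
  · have hlt : ∀ᶠ s in 𝓝 t, u s x < a ∧ s ∈ I := (htime.eventually (gt_mem_nhds ha)).and hI
    obtain ⟨s, ⟨hs, hsI⟩, hst⟩ :=
      ((hlt.filter_mono nhdsWithin_le_nhds).and (self_mem_nhdsWithin (s := Ioi t))).exists
    rw [nhds_prod_eq]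
    filter_upwards [((gt_mem_nhds hst).and hI).prod_mk
      (hmono.and ((hspace s hsI).eventually (gt_mem_nhds hs)))] with z ⟨⟨hz, hzI⟩, hm, hzs⟩
    exact (hm hzI hsI hz.le).trans_lt hzs

section Nonlinearity

variable {f : ℝ → ℝ} {p : ℝ}

theorem deriv_mul_sub_le_of_convexOn_Ici (hf : ConvexOn ℝ (Ici 0) f) {a b : ℝ}
    (ha : 0 ≤ a) (hb : 0 < b) (hd : DifferentiableAt ℝ f b) :
    deriv f b * (a - b) ≤ f a - f b := by
  rcases lt_trichotomy a b with h | rfl | h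
  · have := hf.slope_le_deriv (mem_Ici.2 ha) (mem_Ici.2 hb.le) h hd
    rw [slope_def_field, div_le_iff₀ (sub_pos.2 h)] at this
    linarith
  · simp
  · have := hf.deriv_le_slope (mem_Ici.2 hb.le) (mem_Ici.2 ha) h hd
    rwa [slope_def_field, le_div_iff₀ (sub_pos.2 h)] at this

theorem derivWithin_zero_mul_sub_le_of_convexOn_Ici (hf : ConvexOn ℝ (Ici 0) f)
    (hd : DifferentiableWithinAt ℝ f (Ici 0) 0) {a b : ℝ} (hb : 0 ≤ b) (hba : b ≤ a) :
    derivWithin f (Ici 0) 0 * (a - b) ≤ f a - f b := by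
  rcases hba.eq_or_lt with rfl | hba
  · simp
  suffices derivWithin f (Ici 0) 0 ≤ (f a - f b) / (a - b) from
    (le_div_iff₀ (sub_pos.2 hba)).1 this
  have h0 : ∀ c > 0, derivWithin f (Ici 0) 0 ≤ (f c - f 0) / (c - 0) := fun c hc ↦ by
    simpa only [slope_def_field] using
      hf.derivWithin_le_slope self_mem_Ici (mem_Ici.2 hc.le) hc hd
  rcases hb.eq_or_lt with rfl | hb
  · exact h0 a hba
  · exact (h0 b hb).trans
      (hf.slope_mono_adjacent self_mem_Ici (mem_Ici.2 (hb.trans hba).le) hb hba)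

theorem eventually_le_two_mul_rpow (hlim : Tendsto (fun s : ℝ ↦ s ^ (-p) * f s) atTop (𝓝 1)) :
    ∀ᶠ s in atTop, f s ≤ 2 * s ^ p := by
  filter_upwards [hlim.eventually (gt_mem_nhds one_lt_two), eventually_gt_atTop 0] with s hs hs0
  rw [Real.rpow_neg hs0.le, inv_mul_lt_iff₀ (Real.rpow_pos_of_pos hs0 p)] at hs
  linarith

theorem exists_lt_one_sub_rpow_div_one_sub {q : ℝ} (hq : q < p) :
    ∃ l ∈ Ioo (0 : ℝ) 1, q < (1 - l ^ p) / (1 - l) := by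
  have hder : HasDerivAt (fun y : ℝ ↦ y ^ p) (p * 1 ^ (p - 1)) 1 :=
    Real.hasDerivAt_rpow_const (Or.inl one_ne_zero)
  have hslope := (hasDerivWithinAt_iff_tendsto_slope' self_notMem_Iio).1
    (hder.hasDerivWithinAt (s := Iio 1))
  rw [Real.one_rpow, mul_one] at hslope
  obtain ⟨l, hlt, hl⟩ :=
    ((hslope.eventually (lt_mem_nhds hq)).and (Ioo_mem_nhdsLT zero_lt_one)).exists
  refine ⟨l, hl, hlt.trans_eq ?_⟩
  rw [slope_def_field, Real.one_rpow, ← neg_div_neg_eq, neg_sub, neg_sub]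

-- The derivative at `s` dominates the secant slope between `l * s` and `s`, whose asymptotics
-- follow from those of `f` itself.
theorem exists_eventually_mul_rpow_le_mul_deriv_sub {q : ℝ} (hq : q < p)
    (hf : ConvexOn ℝ (Ici 0) f) (hd : ∀ s > 0, DifferentiableAt ℝ f s)
    (hlim : Tendsto (fun s : ℝ ↦ s ^ (-p) * f s) atTop (𝓝 1)) :
    ∃ k > 0, ∀ᶠ s in atTop, k * s ^ p ≤ s * deriv f s - q * f s := by
  obtain ⟨l, ⟨hl0, hl1⟩, hl⟩ := exists_lt_one_sub_rpow_div_one_sub hq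
  have hsecant : Tendsto (fun s : ℝ ↦
      (s ^ (-p) * f s - l ^ p * ((l * s) ^ (-p) * f (l * s))) / (1 - l) - q * (s ^ (-p) * f s))
      atTop (𝓝 ((1 - l ^ p * 1) / (1 - l) - q * 1)) :=
    ((hlim.sub ((hlim.comp (tendsto_id.const_mul_atTop hl0)).const_mul _)).div_const _).sub
      (hlim.const_mul q)
  obtain ⟨k, hk0, hk⟩ := exists_between (sub_pos.2 hl)
  refine ⟨k, hk0, ?_⟩
  filter_upwards [hsecant.eventually (lt_mem_nhds (by rwa [mul_one, mul_one])),
    eventually_gt_atTop 0] with s hs hs0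
  have hscale : l ^ p * ((l * s) ^ (-p) * f (l * s)) = s ^ (-p) * f (l * s) := by
    rw [Real.mul_rpow hl0.le hs0.le, Real.rpow_neg hl0.le]
    have := Real.rpow_pos_of_pos hl0 p
    field_simp
  have htangent : (f s - f (l * s)) / (1 - l) ≤ s * deriv f s := by
    rw [div_le_iff₀ (sub_pos.2 hl1)]
    have := deriv_mul_sub_le_of_convexOn_Ici hf (mul_nonneg hl0.le hs0.le) hs0 (hd s hs0)
    linarith
  have hfactor : (s ^ (-p) * f s - s ^ (-p) * f (l * s)) / (1 - l) - q * (s ^ (-p) * f s)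
      = (s ^ p)⁻¹ * ((f s - f (l * s)) / (1 - l) - q * f s) := by
    rw [Real.rpow_neg hs0.le]
    ring
  rw [hscale, hfactor, lt_inv_mul_iff₀ (Real.rpow_pos_of_pos hs0 p)] at hs
  linarith

end Nonlinearity

section Baire

theorem exists_mem_nhds_eventually_forall_nonneg {X : Type*} [TopologicalSpace X] [BaireSpace X]
    {U : Set X} (hU : IsOpen U) (hne : U.Nonempty) {v : ℝ → X → ℝ}
    (hv : ∀ᶠ k in 𝓝[>] (0 : ℝ), ContinuousOn (v k) U)
    (hpos : ∀ x ∈ U, ∀ᶠ k in 𝓝[>] (0 : ℝ), 0 ≤ v k x) :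
    ∃ y ∈ U, ∃ A ∈ 𝓝 y, ∀ᶠ k in 𝓝[>] (0 : ℝ), ∀ x ∈ A, 0 ≤ v k x := by
  have := hU.baireSpace
  have := hne.to_subtype
  obtain ⟨η, hη, hvη⟩ := (nhdsGT_basis (0 : ℝ)).eventually_iff.1 hv
  let F : ℕ → Set U := fun m ↦ ⋂ k ∈ Ioo 0 (min η (1 / (m + 1))), {x | 0 ≤ v k x}
  have hclosed : ∀ m, IsClosed (F m) := fun m ↦ isClosed_biInter fun k hk ↦
    isClosed_Ici.preimage (hvη ⟨hk.1, hk.2.trans_le (min_le_left _ _)⟩).domRestrict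
  have hunion : ⋃ m, F m = univ := by
    refine eq_univ_of_forall fun x ↦ ?_
    obtain ⟨ε, hε, hxε⟩ := (nhdsGT_basis (0 : ℝ)).eventually_iff.1 (hpos x x.2)
    obtain ⟨m, hm⟩ := exists_nat_one_div_lt hε
    exact mem_iUnion.2 ⟨m, mem_iInter₂.2 fun k hk ↦
      hxε ⟨hk.1, (hk.2.trans_le (min_le_right _ _)).trans hm⟩⟩
  obtain ⟨m, y, hy⟩ := nonempty_interior_of_iUnion_of_closed hclosed hunion
  refine ⟨y, y.2, Subtype.val '' F m,
    hU.isOpenEmbedding_subtypeVal.image_mem_nhds.2 (mem_interior_iff_mem_nhds.1 hy), ?_⟩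
  filter_upwards [Ioo_mem_nhdsGT (show (0 : ℝ) < min η (1 / (m + 1)) by positivity)] with k hk
  rintro _ ⟨x, hx, rfl⟩
  exact mem_iInter₂.1 hx k hk

end Baire

section Solution

variable {E : Type*} [NormedAddCommGroup E] [InnerProductSpace ℝ E] [FiniteDimensional ℝ E]

/-- Nonnegative classical solutions of `u_t = Δ u + V(x) f(u)` on `(0, T) × Ω` that are
nondecreasing in time; `u t x` is the value at time `t` and position `x`. -/
structure IsMonotoneSolution (Ω : Set E) (T : ℝ) (f : ℝ → ℝ) (V : E → ℝ) (u : ℝ → E → ℝ) :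
    Prop where
  nonneg : ∀ t ∈ Ioo 0 T, ∀ x ∈ Ω, 0 ≤ u t x
  differentiableAt : ∀ t ∈ Ioo 0 T, ∀ x ∈ Ω, DifferentiableAt ℝ (fun s ↦ u s x) t
  contDiffAt : ∀ t ∈ Ioo 0 T, ∀ x ∈ Ω, ContDiffAt ℝ 2 (u t) x
  deriv_eq : ∀ t ∈ Ioo 0 T, ∀ x ∈ Ω, deriv (fun s ↦ u s x) t = Δ (u t) x + V x * f (u t x)
  deriv_nonneg : ∀ t ∈ Ioo 0 T, ∀ x ∈ Ω, 0 ≤ deriv (fun s ↦ u s x) t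

/-- The time derivative of `u` is bounded below on `A` by a positive constant, for all times close
to the final time `T`. -/
def UniformlyIncreasingOn {X : Type*} (u : ℝ → X → ℝ) (T : ℝ) (A : Set X) : Prop :=
  ∃ c > 0, ∀ᶠ t in 𝓝[<] T, ∀ x ∈ A, c ≤ deriv (fun s ↦ u s x) t

variable {Ω A : Set E} {T t k : ℝ} {f : ℝ → ℝ} {V : E → ℝ} {u : ℝ → E → ℝ} {x : E}

namespace IsMonotoneSolution

theorem hasDerivAt (h : IsMonotoneSolution Ω T f V u) (ht : t ∈ Ioo 0 T) (hx : x ∈ Ω) :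
    HasDerivAt (fun s ↦ u s x) (Δ (u t) x + V x * f (u t x)) t :=
  h.deriv_eq t ht x hx ▸ (h.differentiableAt t ht x hx).hasDerivAt

theorem monotoneOn (h : IsMonotoneSolution Ω T f V u) (hx : x ∈ Ω) :
    MonotoneOn (fun s ↦ u s x) (Ioo 0 T) := by
  refine monotoneOn_of_deriv_nonneg (convex_Ioo 0 T)
    (fun s hs ↦ (h.differentiableAt s hs x hx).continuousAt.continuousWithinAt) ?_ ?_
  · exact fun s hs ↦ (h.differentiableAt s (interior_subset hs) x hx).differentiableWithinAt
  · exact fun s hs ↦ h.deriv_nonneg s (interior_subset hs) x hx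

theorem continuousOn_uncurry (h : IsMonotoneSolution Ω T f V u) (hΩ : IsOpen Ω) :
    ContinuousOn (Function.uncurry u) (Ioo 0 T ×ˢ Ω) := by
  rintro ⟨t, x⟩ ⟨ht, hx⟩
  refine (continuousAt_uncurry_of_monotoneOn (Ioo_mem_nhds ht.1 ht.2) ?_
    (h.differentiableAt t ht x hx).continuousAt
    fun s hs ↦ (h.contDiffAt s hs x hx).continuousAt).continuousWithinAt
  filter_upwards [hΩ.mem_nhds hx] with y hy using h.monotoneOn hy

theorem hasDerivAt_increment (h : IsMonotoneSolution Ω T f V u) (ht : t ∈ Ioo 0 T)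
    (htk : t + k ∈ Ioo 0 T) (hx : x ∈ Ω) :
    HasDerivAt (fun s ↦ u (s + k) x - u s x) (Δ (fun y ↦ u (t + k) y - u t y) x
      + V x * (f (u (t + k) x) - f (u t x))) t := by
  refine (((h.hasDerivAt htk hx).comp_add_const t k).fun_sub (h.hasDerivAt ht hx)).congr_deriv ?_
  have : Δ (fun y ↦ u (t + k) y - u t y) x = Δ (u (t + k)) x - Δ (u t) x :=
    (h.contDiffAt _ htk x hx).laplacian_sub (h.contDiffAt t ht x hx)
  rw [this]
  ring

theorem increment_nonneg (h : IsMonotoneSolution Ω T f V u) (ht : t ∈ Ioo 0 T)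
    (htk : t + k ∈ Ioo 0 T) (hk : 0 ≤ k) (hx : x ∈ Ω) : 0 ≤ u (t + k) x - u t x :=
  sub_nonneg.2 (h.monotoneOn hx ht htk (by linarith))

theorem continuousOn_increment (h : IsMonotoneSolution Ω T f V u) (hΩ : IsOpen Ω) :
    ContinuousOn (fun z : ℝ × E ↦ u (z.1 + k) z.2 - u z.1 z.2)
      {z | z.1 ∈ Ioo 0 T ∧ z.1 + k ∈ Ioo 0 T ∧ z.2 ∈ Ω} := by
  have hu := h.continuousOn_uncurry hΩ
  refine ContinuousOn.sub ?_ (hu.mono fun z hz ↦ ⟨hz.1, hz.2.2⟩)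
  exact hu.comp (f := fun z : ℝ × E ↦ (z.1 + k, z.2)) (by fun_prop) fun z hz ↦ hz.2

theorem continuousOn_deriv (h : IsMonotoneSolution Ω T f V u) (hf : ContinuousOn f (Ici 0))
    (hV : ContinuousOn V Ω) (ht : t ∈ Ioo 0 T) :
    ContinuousOn (fun x ↦ deriv (fun s ↦ u s x) t) Ω := by
  have hu : ContinuousOn (u t) Ω := fun x hx ↦
    (h.contDiffAt t ht x hx).continuousAt.continuousWithinAt
  have hΔ : ContinuousOn (Δ (u t)) Ω := fun x hx ↦
    (continuousAt_laplacian (h.contDiffAt t ht x hx)).continuousWithinAt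
  exact (hΔ.add (hV.mul (hf.comp hu (h.nonneg t ht)))).congr (h.deriv_eq t ht)

theorem exists_mem_nhds_eventually_mul_le_increment (h : IsMonotoneSolution Ω T f V u)
    (hΩ : IsOpen Ω) (hf : ContinuousOn f (Ici 0)) (hV : ContinuousOn V Ω) (ht : t ∈ Ioo 0 T)
    (hx : x ∈ Ω) (hpos : 0 < deriv (fun s ↦ u s x) t) :
    ∃ y ∈ Ω, ∃ A ∈ 𝓝 y, ∃ c > 0, ∀ᶠ k in 𝓝[>] (0 : ℝ), ∀ z ∈ A, c * k ≤ u (t + k) z - u t z := by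
  obtain ⟨c, hc, hcd⟩ := exists_between hpos
  have hU : IsOpen (Ω ∩ (fun z ↦ deriv (fun s ↦ u s z) t) ⁻¹' Ioi c) :=
    (h.continuousOn_deriv hf hV ht).isOpen_inter_preimage hΩ isOpen_Ioi
  have htk : ∀ᶠ k in 𝓝[>] (0 : ℝ), t + k ∈ Ioo 0 T := by
    filter_upwards [Ioo_mem_nhdsGT (sub_pos.2 ht.2)] with k hk
    exact ⟨add_pos ht.1 hk.1, by linarith [hk.2]⟩
  have hcont : ∀ᶠ k in 𝓝[>] (0 : ℝ), ContinuousOn (fun z ↦ u (t + k) z - u t z - c * k)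
      (Ω ∩ (fun z ↦ deriv (fun s ↦ u s z) t) ⁻¹' Ioi c) := by
    filter_upwards [htk] with k hk z hz
    exact (((h.contDiffAt _ hk z hz.1).continuousAt.sub
      (h.contDiffAt t ht z hz.1).continuousAt).sub continuousAt_const).continuousWithinAt
  obtain ⟨y, hy, A, hA, hAk⟩ :=
    exists_mem_nhds_eventually_forall_nonneg hU ⟨x, hx, hcd⟩ hcont fun z ⟨hz, hzc⟩ ↦ by
      have hslope := (hasDerivAt_iff_tendsto_slope_zero.1
        (h.differentiableAt t ht z hz).hasDerivAt).mono_left (nhdsGT_le_nhdsNE 0)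
      filter_upwards [hslope.eventually (lt_mem_nhds hzc), self_mem_nhdsWithin] with k hk hk0
      rw [smul_eq_mul, lt_inv_mul_iff₀ hk0] at hk
      linarith
  exact ⟨y, hy.1, A, hA, c, hc, hAk.mono fun k hk z hz ↦ sub_nonneg.1 (hk z hz)⟩

theorem eventually_mul_le_increment (h : IsMonotoneSolution Ω T f V u)
    (hA : UniformlyIncreasingOn u T A) (hAΩ : A ⊆ Ω) (hT : 0 < T) :
    ∃ c > 0, ∀ᶠ t in 𝓝[<] T, ∀ k > 0, t + k < T → ∀ x ∈ A, c * k ≤ u (t + k) x - u t x := by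
  obtain ⟨c, hc, hcA⟩ := hA
  obtain ⟨t₀, ht₀, hct⟩ :=
    (nhdsLT_basis_of_exists_lt ⟨0, hT⟩).eventually_iff.1 (hcA.and (Ioo_mem_nhdsLT hT))
  refine ⟨c, hc, ?_⟩
  filter_upwards [Ioo_mem_nhdsLT ht₀] with t ht k hk htk x hx
  have hsub : ∀ s ∈ Icc t (t + k), s ∈ Ioo t₀ T := fun s hs ↦
    ⟨ht.1.trans_le hs.1, hs.2.trans_lt htk⟩
  have hd : ∀ s ∈ Icc t (t + k), DifferentiableAt ℝ (fun s ↦ u s x) s := fun s hs ↦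
    h.differentiableAt s (hct (hsub s hs)).2 x (hAΩ hx)
  have := (convex_Icc t (t + k)).mul_sub_le_image_sub_of_le_deriv
    (fun s hs ↦ (hd s hs).continuousAt.continuousWithinAt)
    (fun s hs ↦ (hd s (interior_subset hs)).differentiableWithinAt)
    (fun s hs ↦ (hct (hsub s (interior_subset hs))).1 x hx)
    t (left_mem_Icc.2 (by linarith)) (t + k) (right_mem_Icc.2 (by linarith)) (by linarith)
  simpa only [add_sub_cancel_left] using this

end IsMonotoneSolution

end Solution

section Propagation

theorem le_deriv_of_eventually_mul_le {φ : ℝ → ℝ} {c t : ℝ} (hφ : DifferentiableAt ℝ φ t)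
    (hle : ∀ᶠ k in 𝓝[>] 0, c * k ≤ φ (t + k) - φ t) : c ≤ deriv φ t := by
  refine ge_of_tendsto ((hasDerivAt_iff_tendsto_slope_zero.1 hφ.hasDerivAt).mono_left
    (nhdsGT_le_nhdsNE 0)) ?_
  filter_upwards [hle, self_mem_nhdsWithin] with k hk hk0
  rwa [smul_eq_mul, le_inv_mul_iff₀ hk0, mul_comm]

theorem exists_neg_mul_sub_le_mul_sub {f : ℝ → ℝ} {X : Type*} [TopologicalSpace X] {V : X → ℝ}
    {K : Set X} (hK : IsCompact K) (hV : ContinuousOn V K)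
    (hV0 : ∀ x ∈ K, 0 ≤ V x) (hf : ConvexOn ℝ (Ici 0) f)
    (hd : DifferentiableWithinAt ℝ f (Ici 0) 0) :
    ∃ L, ∀ x ∈ K, ∀ c b, 0 ≤ b → b ≤ c → -L * (c - b) ≤ V x * (f c - f b) := by
  obtain ⟨M, hM⟩ := hK.bddAbove_image hV
  refine ⟨M * |derivWithin f (Ici 0) 0|, fun x hx c b hb hbc ↦ ?_⟩
  have hVM : V x ≤ M := hM (mem_image_of_mem V hx)
  have hslope : -|derivWithin f (Ici 0) 0| * (c - b) ≤ f c - f b :=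
    (mul_le_mul_of_nonneg_right (neg_abs_le _) (sub_nonneg.2 hbc)).trans
      (derivWithin_zero_mul_sub_le_of_convexOn_Ici hf hd hb hbc)
  have hmul : V x * (|derivWithin f (Ici 0) 0| * (c - b))
      ≤ M * (|derivWithin f (Ici 0) 0| * (c - b)) :=
    mul_le_mul_of_nonneg_right hVM (mul_nonneg (abs_nonneg _) (sub_nonneg.2 hbc))
  linarith [mul_le_mul_of_nonneg_left hslope (hV0 x hx)]

variable {E : Type*} [NormedAddCommGroup E]

/-- A bump centred at `y` whose support, the closed ball of radius `r₀ + a * s`, grows linearly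
with the elapsed time `s`. For large `Λ` it is a strict subsolution of a linear heat equation. -/
noncomputable def expandingBump (y : E) (Λ r₀ a s : ℝ) (x : E) : ℝ :=
  Real.exp (-Λ * s) * ((r₀ + a * s) ^ 2 - ‖x - y‖ ^ 2) ^ 2

theorem expandingBump_zero_le_pow {x y : E} {r₀ : ℝ} (Λ a : ℝ) (hx : ‖x - y‖ ≤ r₀) :
    expandingBump y Λ r₀ a 0 x ≤ r₀ ^ 4 := by
  have hsq : 0 ≤ r₀ ^ 2 - ‖x - y‖ ^ 2 := sub_nonneg.2 (by gcongr)
  calc expandingBump y Λ r₀ a 0 x = (r₀ ^ 2 - ‖x - y‖ ^ 2) ^ 2 := by simp [expandingBump]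
    _ ≤ (r₀ ^ 2) ^ 2 := pow_le_pow_left₀ hsq (sub_le_self _ (sq_nonneg _)) 2
    _ = r₀ ^ 4 := by ring

theorem continuous_uncurry_expandingBump (y : E) (Λ r₀ a : ℝ) :
    Continuous (Function.uncurry (expandingBump y Λ r₀ a)) := by
  unfold expandingBump Function.uncurry
  fun_prop

theorem hasDerivAt_expandingBump (y x : E) (Λ r₀ a s : ℝ) :
    HasDerivAt (fun s ↦ expandingBump y Λ r₀ a s x)
      (Real.exp (-Λ * s) * (4 * a * (r₀ + a * s) * ((r₀ + a * s) ^ 2 - ‖x - y‖ ^ 2)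
        - Λ * ((r₀ + a * s) ^ 2 - ‖x - y‖ ^ 2) ^ 2)) s := by
  have hexp := ((hasDerivAt_id s).const_mul (-Λ)).exp
  have hradius := (((((hasDerivAt_id s).const_mul a).const_add r₀).fun_pow 2).sub_const
    (‖x - y‖ ^ 2)).fun_pow 2
  refine (hexp.mul hradius).congr_deriv ?_
  simp only [id_eq]
  ring

theorem isCompact_preimage_Icc_inter_norm_sub_le [ProperSpace E] {r : ℝ → ℝ} (hr : Continuous r)
    {R t₁ b : ℝ} (hR : ∀ t ∈ Icc t₁ b, r t ≤ R) (y : E) :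
    IsCompact (Prod.fst ⁻¹' Icc t₁ b ∩ {z : ℝ × E | ‖z.2 - y‖ ≤ r z.1}) :=
  (isCompact_Icc.prod (isCompact_closedBall y R)).of_isClosed_subset
    ((isClosed_Icc.preimage continuous_fst).inter (isClosed_le (by fun_prop) (by fun_prop)))
    fun z hz ↦ ⟨hz.1, mem_closedBall_iff_norm.2 (hz.2.trans (hR z.1 hz.1))⟩

theorem exists_pos_eventually_le_expandingBump (y : E) (Λ : ℝ) {r₀ a s ρ : ℝ} (hρ0 : 0 ≤ ρ)
    (hρ : ρ < r₀ + a * s) :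
    ∃ m > 0, ∀ᶠ s' in 𝓝 s, ∀ x ∈ closedBall y ρ,
      ‖x - y‖ ≤ r₀ + a * s' ∧ m ≤ expandingBump y Λ r₀ a s' x := by
  have hpos : 0 < Real.exp (-Λ * s) * ((r₀ + a * s) ^ 2 - ρ ^ 2) ^ 2 :=
    mul_pos (Real.exp_pos _) (pow_pos (sub_pos.2 (by gcongr)) 2)
  obtain ⟨m, hm, hlt⟩ := exists_between hpos
  refine ⟨m, hm, ?_⟩
  have hcont : Continuous fun s' ↦ Real.exp (-Λ * s') * ((r₀ + a * s') ^ 2 - ρ ^ 2) ^ 2 := by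
    fun_prop
  have hradius : Continuous fun s' ↦ r₀ + a * s' := by fun_prop
  filter_upwards [hcont.continuousAt.eventually (lt_mem_nhds hlt),
    hradius.continuousAt.eventually (lt_mem_nhds hρ)] with s' hs' hρs x hx
  have hx : ‖x - y‖ ≤ ρ := mem_closedBall_iff_norm.1 hx
  have : 0 ≤ (r₀ + a * s') ^ 2 - ρ ^ 2 := sub_nonneg.2 (by gcongr)
  refine ⟨hx.trans hρs.le, hs'.le.trans ?_⟩
  unfold expandingBump
  gcongr

variable [InnerProductSpace ℝ E]

theorem contDiff_expandingBump (y : E) (Λ r₀ a s : ℝ) :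
    ContDiff ℝ 2 (expandingBump y Λ r₀ a s) :=
  contDiff_const.mul ((contDiff_const.sub ((contDiff_id.sub contDiff_const).norm_sq ℝ)).pow 2)

variable [FiniteDimensional ℝ E]

theorem laplacian_expandingBump (y x : E) (Λ r₀ a s : ℝ) :
    Δ (expandingBump y Λ r₀ a s) x = Real.exp (-Λ * s) *
      (8 * ‖x - y‖ ^ 2 - 4 * Module.finrank ℝ E * ((r₀ + a * s) ^ 2 - ‖x - y‖ ^ 2)) := by
  set w := (r₀ + a * s) ^ 2
  have h1 : deriv (fun σ ↦ (w - σ) ^ 2) = fun σ ↦ -2 * (w - σ) := by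
    ext σ
    refine (((hasDerivAt_id σ).const_sub w).fun_pow 2).deriv.trans ?_
    simp only [id_eq]
    ring
  have h2 : deriv (fun σ ↦ -2 * (w - σ)) (‖x - y‖ ^ 2) = 2 := by
    simp
  have hC : ContDiffAt ℝ 2 (fun z ↦ (w - ‖z - y‖ ^ 2) ^ 2) x :=
    ((contDiff_const.sub ((contDiff_id.sub contDiff_const).norm_sq ℝ)).pow 2).contDiffAt
  refine (laplacian_const_mul (Real.exp (-Λ * s)) hC).trans ?_
  rw [laplacian_comp_norm_sub_sq (φ := fun σ ↦ (w - σ) ^ 2) (by fun_prop), h1, h2]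
  ring

theorem expandingBump_strict_subsolution {y x : E} {L R r₀ a s : ℝ} (hr₀ : 0 < r₀) (ha : 0 ≤ a)
    (hs : 0 ≤ s) (hR : r₀ + a * s ≤ R) (hx : ‖x - y‖ ≤ r₀ + a * s) {Λ : ℝ}
    (hΛ : Λ = L + (4 * R * a + 8 + 4 * Module.finrank ℝ E) ^ 2 / (16 * r₀ ^ 2)) :
    deriv (fun s ↦ expandingBump y Λ r₀ a s x) s - Δ (expandingBump y Λ r₀ a s) x
      < -L * expandingBump y Λ r₀ a s x := by
  rw [(hasDerivAt_expandingBump y x Λ r₀ a s).deriv, laplacian_expandingBump, expandingBump]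
  set r := r₀ + a * s
  set B := 4 * R * a + 8 + 4 * (Module.finrank ℝ E : ℝ) with hB
  set g := r ^ 2 - ‖x - y‖ ^ 2
  have hr : r₀ ^ 2 ≤ r ^ 2 := by gcongr; exact le_add_of_nonneg_right (by positivity)
  have hg0 : 0 ≤ g := sub_nonneg.2 (by gcongr)
  have hBg : (4 * r * a + 8 + 4 * Module.finrank ℝ E) * g ≤ B * g := by rw [hB]; gcongr
  have hquad : 0 < B ^ 2 / (16 * r₀ ^ 2) * g ^ 2 - B * g + 8 * r ^ 2 := by
    have hsq : B ^ 2 / (16 * r₀ ^ 2) * g ^ 2 - B * g + 8 * r ^ 2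
        = (B * g / (4 * r₀) - 2 * r₀) ^ 2 + (8 * r ^ 2 - 4 * r₀ ^ 2) := by
      field_simp
      ring
    rw [hsq]
    nlinarith [sq_nonneg (B * g / (4 * r₀) - 2 * r₀)]
  have hcoeff : 4 * a * r * g - Λ * g ^ 2
      - (8 * ‖x - y‖ ^ 2 - 4 * Module.finrank ℝ E * g) < -L * g ^ 2 := by
    rw [show ‖x - y‖ ^ 2 = r ^ 2 - g by ring, hΛ]
    linarith
  have := mul_lt_mul_of_pos_left hcoeff (Real.exp_pos (-Λ * s))
  linarith

variable {Ω : Set E} {T : ℝ} {f : ℝ → ℝ} {V : E → ℝ} {u : ℝ → E → ℝ}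

theorem IsMonotoneSolution.exists_hasDerivAt_increment_sub_expandingBump
    (h : IsMonotoneSolution Ω T f V u) {x y : E} {t t₁ k L R r₀ a ε Λ : ℝ} (ht : t ∈ Ioo 0 T)
    (htk : t + k ∈ Ioo 0 T) (hk : 0 ≤ k) (hxΩ : x ∈ Ω)
    (hL : ∀ c b, 0 ≤ b → b ≤ c → -L * (c - b) ≤ V x * (f c - f b))
    (hr₀ : 0 < r₀) (ha : 0 ≤ a) (hε : 0 < ε) (ht₁ : t₁ ≤ t) (hR : r₀ + a * (t - t₁) ≤ R)
    (hx : ‖x - y‖ ≤ r₀ + a * (t - t₁))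
    (hΛ : Λ = L + (4 * R * a + 8 + 4 * Module.finrank ℝ E) ^ 2 / (16 * r₀ ^ 2)) :
    ∃ J', HasDerivAt
        (fun s ↦ u (s + k) x - u s x - ε * expandingBump y Λ r₀ a (s - t₁) x) J' t ∧
      -L * (u (t + k) x - u t x - ε * expandingBump y Λ r₀ a (t - t₁) x) <
        J' - Δ (fun z ↦ u (t + k) z - u t z - ε * expandingBump y Λ r₀ a (t - t₁) z) x := by
  have hinc : ContDiffAt ℝ 2 (fun z ↦ u (t + k) z - u t z) x :=
    (h.contDiffAt _ htk x hxΩ).sub (h.contDiffAt t ht x hxΩ)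
  have hbump := (contDiff_expandingBump y Λ r₀ a (t - t₁)).contDiffAt (x := x)
  have hΔ : Δ (fun z ↦ u (t + k) z - u t z - ε * expandingBump y Λ r₀ a (t - t₁) z) x
      = Δ (fun z ↦ u (t + k) z - u t z) x - ε * Δ (expandingBump y Λ r₀ a (t - t₁)) x :=
    (hinc.laplacian_sub (contDiffAt_const.mul hbump)).trans
      (congrArg _ (laplacian_const_mul ε hbump))
  have hstrict := expandingBump_strict_subsolution hr₀ ha (sub_nonneg.2 ht₁) hR hx hΛ
  rw [(hasDerivAt_expandingBump y x Λ r₀ a (t - t₁)).deriv] at hstrict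
  refine ⟨_, (h.hasDerivAt_increment ht htk hxΩ).fun_sub
    (((hasDerivAt_expandingBump y x Λ r₀ a (t - t₁)).comp_sub_const t t₁).const_mul ε), ?_⟩
  have hreaction := hL _ _ (h.nonneg t ht x hxΩ)
    (sub_nonneg.1 (h.increment_nonneg ht htk hk hxΩ))
  rw [hΔ]
  linarith [mul_lt_mul_of_pos_left hstrict hε]

theorem IsMonotoneSolution.expandingBump_le_increment (h : IsMonotoneSolution Ω T f V u)
    (hΩ : IsOpen Ω) {y : E} {L R r₀ a : ℝ} (hsub : closedBall y R ⊆ Ω)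
    (hL : ∀ x ∈ closedBall y R, ∀ c b, 0 ≤ b → b ≤ c → -L * (c - b) ≤ V x * (f c - f b))
    (hr₀ : 0 < r₀) (ha : 0 ≤ a) {t₁ b k ε : ℝ} (ht₁ : 0 < t₁) (hb : r₀ + a * (b - t₁) ≤ R)
    (hk : 0 ≤ k) (hbk : b + k < T) (hε : 0 < ε)
    (hstart : ∀ x ∈ closedBall y r₀, ε * r₀ ^ 4 ≤ u (t₁ + k) x - u t₁ x) {Λ : ℝ}
    (hΛ : Λ = L + (4 * R * a + 8 + 4 * Module.finrank ℝ E) ^ 2 / (16 * r₀ ^ 2)) :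
    ∀ t ∈ Icc t₁ b, ∀ x, ‖x - y‖ ≤ r₀ + a * (t - t₁) →
      ε * expandingBump y Λ r₀ a (t - t₁) x ≤ u (t + k) x - u t x := by
  set W : Set (ℝ × E) := {z | ‖z.2 - y‖ ≤ r₀ + a * (z.1 - t₁)} with hW
  have hradius : ∀ t ∈ Icc t₁ b, r₀ + a * (t - t₁) ≤ R := fun t ht ↦
    (by gcongr; exact ht.2 : r₀ + a * (t - t₁) ≤ r₀ + a * (b - t₁)).trans hb
  have hball : ∀ t ∈ Icc t₁ b, ∀ x, ‖x - y‖ ≤ r₀ + a * (t - t₁) → x ∈ closedBall y R :=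
    fun t ht x hx ↦ mem_closedBall_iff_norm.2 (hx.trans (hradius t ht))
  have htime : ∀ t ∈ Icc t₁ b, t ∈ Ioo 0 T ∧ t + k ∈ Ioo 0 T := fun t ht ↦
    ⟨⟨by linarith [ht.1], by linarith [ht.2]⟩, by linarith [ht.1], by linarith [ht.2]⟩
  have hcont : ContinuousOn (Function.uncurry fun t x ↦
      u (t + k) x - u t x - ε * expandingBump y Λ r₀ a (t - t₁) x)
      (Prod.fst ⁻¹' Icc t₁ b ∩ W) := by
    refine ((h.continuousOn_increment hΩ).mono fun z hz ↦ ⟨(htime _ hz.1).1, (htime _ hz.1).2,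
      hsub (hball _ hz.1 _ hz.2)⟩).sub (Continuous.continuousOn ?_)
    exact continuous_const.mul ((continuous_uncurry_expandingBump y Λ r₀ a).comp
      (f := fun z : ℝ × E ↦ (z.1 - t₁, z.2)) (by fun_prop))
  suffices hJ : ∀ t ∈ Icc t₁ b, ∀ x, (t, x) ∈ W →
      0 ≤ u (t + k) x - u t x - ε * expandingBump y Λ r₀ a (t - t₁) x from
    fun t ht x hx ↦ sub_nonneg.1 (hJ t ht x hx)
  refine nonneg_of_parabolic_supersolution (L := -L)
    (isCompact_preimage_Icc_inter_norm_sub_le (by fun_prop) hradius y) hcont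
    (fun x hx ↦ ?_) (fun t ht x hx ↦ ?_) (fun t ht x hx _ ↦ ?_)
  · replace hx : ‖x - y‖ ≤ r₀ := by simpa [hW] using hx
    rw [sub_self]
    exact sub_nonneg.2 ((mul_le_mul_of_nonneg_left (expandingBump_zero_le_pow Λ a hx) hε.le).trans
      (hstart x (mem_closedBall_iff_norm.2 hx)))
  · replace hx : ‖x - y‖ = r₀ + a * (t - t₁) :=
      frontier_le_subset_eq (by fun_prop) (by fun_prop) hx
    have hxΩ := hsub (hball t ht x hx.le)
    simpa [expandingBump, hx] using
      h.increment_nonneg (htime t ht).1 (htime t ht).2 hk hxΩ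
  · replace hx : ‖x - y‖ ≤ r₀ + a * (t - t₁) := interior_subset (s := W) hx
    replace ht := Ioc_subset_Icc_self ht
    obtain ⟨ht0, htk⟩ := htime t ht
    have hxR := hball t ht x hx
    exact ⟨((h.contDiffAt _ htk x (hsub hxR)).sub (h.contDiffAt t ht0 x (hsub hxR))).sub
      (contDiffAt_const.mul (contDiff_expandingBump y Λ r₀ a (t - t₁)).contDiffAt),
      h.exists_hasDerivAt_increment_sub_expandingBump ht0 htk hk (hsub hxR) (hL x hxR) hr₀ ha hε
        ht.1 (hradius t ht) hx hΛ⟩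

namespace UniformlyIncreasingOn

variable {X : Type*} {w : ℝ → X → ℝ} {A B : Set X}

theorem mono (hB : UniformlyIncreasingOn w T B) (hAB : A ⊆ B) : UniformlyIncreasingOn w T A :=
  let ⟨c, hc, hcB⟩ := hB
  ⟨c, hc, hcB.mono fun _ ht x hx ↦ ht x (hAB hx)⟩

theorem union (hA : UniformlyIncreasingOn w T A) (hB : UniformlyIncreasingOn w T B) :
    UniformlyIncreasingOn w T (A ∪ B) := by
  obtain ⟨c, hc, hcA⟩ := hA
  obtain ⟨d, hd, hdB⟩ := hB
  refine ⟨min c d, lt_min hc hd, ?_⟩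
  filter_upwards [hcA, hdB] with t htA htB x hx
  exact hx.elim (fun hx ↦ (min_le_left c d).trans (htA x hx))
    fun hx ↦ (min_le_right c d).trans (htB x hx)

end UniformlyIncreasingOn

namespace IsMonotoneSolution

theorem uniformlyIncreasingOn_closedBall (h : IsMonotoneSolution Ω T f V u) (hΩ : IsOpen Ω)
    (hf : ConvexOn ℝ (Ici 0) f) (hd : DifferentiableWithinAt ℝ f (Ici 0) 0)
    (hV : ContinuousOn V Ω) (hV0 : ∀ x ∈ Ω, 0 ≤ V x) {y : E} {r₀ R ρ t₁ c : ℝ} (hr₀ : 0 < r₀)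
    (hr₀R : r₀ ≤ R) (hρ0 : 0 ≤ ρ) (hρ : ρ < R) (hsub : closedBall y R ⊆ Ω) (ht₁ : t₁ ∈ Ioo 0 T)
    (hc : 0 < c)
    (hstart : ∀ᶠ k in 𝓝[>] (0 : ℝ), ∀ x ∈ closedBall y r₀, c * k ≤ u (t₁ + k) x - u t₁ x) :
    UniformlyIncreasingOn u T (closedBall y ρ) := by
  obtain ⟨L, hL⟩ := exists_neg_mul_sub_le_mul_sub (isCompact_closedBall y R) (hV.mono hsub)
    (fun x hx ↦ hV0 x (hsub hx)) hf hd
  have hT : 0 < T - t₁ := sub_pos.2 ht₁.2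
  set a := (R - r₀) / (T - t₁)
  have ha : 0 ≤ a := div_nonneg (sub_nonneg.2 hr₀R) hT.le
  have hend : r₀ + a * (T - t₁) = R := by rw [div_mul_cancel₀ _ hT.ne']; ring
  set Λ := L + (4 * R * a + 8 + 4 * Module.finrank ℝ E) ^ 2 / (16 * r₀ ^ 2) with hΛ
  obtain ⟨m, hm, hbump⟩ := exists_pos_eventually_le_expandingBump y Λ hρ0 (hρ.trans_eq hend.symm)
  have hshift : Tendsto (fun t ↦ t - t₁) (𝓝[<] T) (𝓝 (T - t₁)) :=
    ((continuous_id.sub continuous_const).tendsto T).mono_left nhdsWithin_le_nhds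
  refine ⟨c / r₀ ^ 4 * m, by positivity, ?_⟩
  filter_upwards [hshift.eventually hbump, Ioo_mem_nhdsLT ht₁.2] with t ht htT x hx
  obtain ⟨hxr, hxm⟩ := ht x hx
  refine le_deriv_of_eventually_mul_le (h.differentiableAt t ⟨ht₁.1.trans htT.1, htT.2⟩ x
    (hsub (closedBall_subset_closedBall hρ.le hx))) ?_
  filter_upwards [hstart, Ioo_mem_nhdsGT (sub_pos.2 htT.2)] with k hk hkT
  have hkpos : 0 < k := hkT.1
  have htR : r₀ + a * (t - t₁) ≤ R := by
    rw [← hend]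
    gcongr
    exact htT.2.le
  have := h.expandingBump_le_increment hΩ hsub hL hr₀ ha ht₁.1 htR hkpos.le
    (by linarith [hkT.2]) (ε := c * k / r₀ ^ 4) (by positivity)
    (fun z hz ↦ (div_mul_cancel₀ _ (by positivity)).trans_le (hk z hz)) hΛ t
    ⟨htT.1.le, le_rfl⟩ x hxr
  calc c / r₀ ^ 4 * m * k = c * k / r₀ ^ 4 * m := by ring
    _ ≤ c * k / r₀ ^ 4 * expandingBump y Λ r₀ a (t - t₁) x := by gcongr
    _ ≤ _ := this

theorem uniformlyIncreasingOn_closedBall_of_subset (h : IsMonotoneSolution Ω T f V u)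
    (hΩ : IsOpen Ω) (hT : 0 < T) (hf : ConvexOn ℝ (Ici 0) f)
    (hd : DifferentiableWithinAt ℝ f (Ici 0) 0) (hV : ContinuousOn V Ω)
    (hV0 : ∀ x ∈ Ω, 0 ≤ V x) {y : E} {A : Set E} (hA : A ∈ 𝓝 y) {R ρ : ℝ} (hρ0 : 0 ≤ ρ)
    (hρ : ρ < R) (hsub : closedBall y R ⊆ Ω) (hinc : UniformlyIncreasingOn u T A) :
    UniformlyIncreasingOn u T (closedBall y ρ) := by
  have hR : 0 < R := hρ0.trans_lt hρ
  obtain ⟨r, hr, hrA⟩ := nhds_basis_closedBall.mem_iff.1 hA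
  have hball : closedBall y (min r R) ⊆ Ω :=
    (closedBall_subset_closedBall (min_le_right r R)).trans hsub
  obtain ⟨c, hc, hct⟩ := h.eventually_mul_le_increment
    (hinc.mono ((closedBall_subset_closedBall (min_le_left r R)).trans hrA)) hball hT
  obtain ⟨t₁, hct₁, ht₁⟩ := (hct.and (Ioo_mem_nhdsLT hT)).exists
  refine h.uniformlyIncreasingOn_closedBall hΩ hf hd hV hV0 (lt_min hr hR) (min_le_right r R)
    hρ0 hρ hsub ht₁ hc ?_
  filter_upwards [Ioo_mem_nhdsGT (sub_pos.2 ht₁.2)] with k hk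
  exact hct₁ k hk.1 (by linarith [hk.2])

theorem uniformlyIncreasingOn_of_isCompact (h : IsMonotoneSolution Ω T f V u) (hΩ : IsOpen Ω)
    (hconn : IsPreconnected Ω) (hf : ConvexOn ℝ (Ici 0) f) (hfc : ContinuousOn f (Ici 0))
    (hd : DifferentiableWithinAt ℝ f (Ici 0) 0) (hV : ContinuousOn V Ω)
    (hV0 : ∀ x ∈ Ω, 0 ≤ V x) {t₁ : ℝ} {x₁ : E} (ht₁ : t₁ ∈ Ioo 0 T) (hx₁ : x₁ ∈ Ω)
    (hpos : 0 < deriv (fun s ↦ u s x₁) t₁) {K : Set E} (hK : IsCompact K) (hKΩ : K ⊆ Ω) :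
    UniformlyIncreasingOn u T K := by
  have hT : 0 < T := ht₁.1.trans ht₁.2
  set G : Set E := {x | ∃ A ∈ 𝓝 x, UniformlyIncreasingOn u T A}
  have hG : IsOpen G := isOpen_iff_mem_nhds.2 fun x ⟨A, hA, hinc⟩ ↦
    (eventually_mem_nhds_iff.2 hA).mono fun y hy ↦ ⟨A, hy, hinc⟩
  have hne : (Ω ∩ G).Nonempty := by
    obtain ⟨y, hy, A, hA, c, hc, hstart⟩ :=
      h.exists_mem_nhds_eventually_mul_le_increment hΩ hfc hV ht₁ hx₁ hpos
    obtain ⟨r, hr, hrA⟩ := nhds_basis_closedBall.mem_iff.1 (inter_mem hA (hΩ.mem_nhds hy))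
    exact ⟨y, hy, closedBall y (r / 2), closedBall_mem_nhds y (half_pos hr),
      h.uniformlyIncreasingOn_closedBall hΩ hf hd hV hV0 hr le_rfl (half_pos hr).le
        (half_lt_self hr) (fun x hx ↦ (hrA hx).2) ht₁ hc
        (hstart.mono fun k hk x hx ↦ hk x (hrA hx).1)⟩
  have hclosed : closure G ∩ Ω ⊆ G := by
    rintro x ⟨hxG, hxΩ⟩
    obtain ⟨d, hd0, hdΩ⟩ := nhds_basis_closedBall.mem_iff.1 (hΩ.mem_nhds hxΩ)
    obtain ⟨y, ⟨A, hA, hinc⟩, hxy⟩ := mem_closure_iff.1 hxG (d / 4) (by positivity)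
    refine ⟨closedBall y (d / 2), mem_of_superset (ball_mem_nhds x (show 0 < d / 4 by positivity))
      fun z hz ↦ ?_, h.uniformlyIncreasingOn_closedBall_of_subset hΩ hT hf hd hV hV0 hA
        (R := 3 * d / 4) (by positivity) (by linarith) (fun z hz ↦ hdΩ ?_) hinc⟩
    · rw [mem_closedBall]
      linarith [dist_triangle z x y, mem_ball.1 hz]
    · rw [mem_closedBall] at hz ⊢
      linarith [dist_triangle z y x, dist_comm x y]
  have hΩG : Ω ⊆ G := hconn.subset_of_closure_inter_subset hG hne hclosed
  refine hK.induction_on ⟨1, one_pos, by simp⟩ (fun _ _ hst ht ↦ ht.mono hst)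
    (fun _ _ hs ht ↦ hs.union ht) fun x hx ↦ ?_
  obtain ⟨A, hA, hinc⟩ := hΩG (hKΩ hx)
  exact ⟨A, mem_nhdsWithin_of_mem_nhds hA, hinc⟩

end IsMonotoneSolution

end Propagation

section Cutoff

open scoped Manifold ContDiff

variable {E : Type*} [NormedAddCommGroup E] [InnerProductSpace ℝ E] [FiniteDimensional ℝ E]
  {K Ω : Set E} {V : E → ℝ}

/-- Cutoff functions `χ` equal to `1` on `K` and supported in `Ω`, whose derivatives up to order two
are controlled by the potential `V`: in particular `χ` varies only where `V` is positive. -/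
structure IsCutoff (K Ω : Set E) (V : E → ℝ) (N : ℝ) (χ : E → ℝ) : Prop where
  contDiff : ContDiff ℝ 2 χ
  nonneg : ∀ x, 0 ≤ χ x
  le_one : ∀ x, χ x ≤ 1
  eq_one : ∀ x ∈ K, χ x = 1
  hasCompactSupport : HasCompactSupport χ
  tsupport_subset : tsupport χ ⊆ Ω
  norm_gradient_sq_add_abs_laplacian_le : ∀ x ∈ Ω, ‖∇ χ x‖ ^ 2 + |Δ χ x| ≤ N * V x

theorem norm_gradient_sq_add_abs_laplacian_of_eventuallyEq_const {χ : E → ℝ} {c : ℝ} {x : E}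
    (h : χ =ᶠ[𝓝 x] fun _ ↦ c) : ‖∇ χ x‖ ^ 2 + |Δ χ x| = 0 := by
  have hgrad : ∇ χ x = 0 := by rw [h.gradient_eq, gradient_fun_const]
  have hlap : Δ χ x = 0 := by
    rw [(InnerProductSpace.laplacian_congr_nhds h).eq_of_nhds]
    exact congrFun InnerProductSpace.laplacian_const x
  simp [hgrad, hlap]

theorem exists_isCutoff (hK : IsCompact K) (hΩ : IsOpen Ω) (hKΩ : K ⊆ Ω) (hV : ContinuousOn V Ω)
    (hV0 : ∀ x ∈ Ω, 0 ≤ V x) (hVK : ∀ x ∈ frontier K, 0 < V x) :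
    ∃ N χ, IsCutoff K Ω V N χ := by
  have hU : IsOpen (Ω ∩ V ⁻¹' Ioi 0 ∪ interior K) :=
    (hV.isOpen_inter_preimage hΩ isOpen_Ioi).union isOpen_interior
  have hKU : K ⊆ Ω ∩ V ⁻¹' Ioi 0 ∪ interior K := fun x hx ↦
    or_iff_not_imp_right.2 fun hxi ↦ ⟨hKΩ hx, hVK x ⟨subset_closure hx, hxi⟩⟩
  obtain ⟨L, hL, hKL, hLU⟩ := exists_compact_between hK hU hKU
  have hLΩ : L ⊆ Ω := hLU.trans (union_subset inter_subset_left (interior_subset.trans hKΩ))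
  obtain ⟨⟨χ, hχc⟩, hχK, hχL, hχ⟩ :=
    exists_contMDiffMap_one_nhds_of_subset_interior (n := 2) 𝓘(ℝ, E) hK.isClosed hKL
  have hχs : tsupport χ ⊆ L := closure_minimal
    (fun x hx ↦ by_contra fun hxL ↦ hx (hχL x hxL)) hL.isClosed
  have hχd : ContDiff ℝ 2 χ := hχc.contDiff
  have hgrad : Continuous fun x ↦ ‖∇ χ x‖ :=
    ((InnerProductSpace.toDual ℝ E).symm.continuous.comp (hχd.continuous_fderiv two_ne_zero)).norm
  have hlap : Continuous (Δ χ) :=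
    continuous_iff_continuousAt.2 fun x ↦ continuousAt_laplacian hχd.contDiffAt
  have hVL : ∀ x ∈ L \ interior K, 0 < V x := fun x hx ↦ ((hLU hx.1).resolve_right hx.2).2
  obtain ⟨N, hN⟩ := (hL.diff isOpen_interior).bddAbove_image
    (f := fun x ↦ (‖∇ χ x‖ ^ 2 + |Δ χ x|) / V x)
    (((hgrad.pow 2).add hlap.abs).continuousOn.div (hV.mono (sdiff_subset.trans hLΩ))
      fun x hx ↦ (hVL x hx).ne')
  refine ⟨max N 0, χ, hχd, fun x ↦ (hχ x).1, fun x ↦ (hχ x).2,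
    fun x hx ↦ hχK.self_of_nhdsSet x hx, hL.of_isClosed_subset (isClosed_tsupport χ) hχs,
    hχs.trans hLΩ, fun x hx ↦ ?_⟩
  have hconst : ∀ c : ℝ, χ =ᶠ[𝓝 x] (fun _ ↦ c) → ‖∇ χ x‖ ^ 2 + |Δ χ x| ≤ max N 0 * V x :=
    fun c h ↦ (norm_gradient_sq_add_abs_laplacian_of_eventuallyEq_const h).trans_le
      (mul_nonneg (le_max_right _ _) (hV0 x hx))
  by_cases hxL : x ∈ L
  · by_cases hxK : x ∈ interior K
    · exact hconst 1 (hχK.filter_mono (nhds_le_nhdsSet (interior_subset hxK)))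
    · rw [← div_le_iff₀ (hVL x ⟨hxL, hxK⟩)]
      exact (hN (mem_image_of_mem _ ⟨hxL, hxK⟩)).trans (le_max_left _ _)
  · exact hconst 0 (eventually_of_mem (hL.isClosed.isOpen_compl.mem_nhds hxL) hχL)

end Cutoff

section FriedmanMcLeod

variable {E : Type*} [NormedAddCommGroup E] [InnerProductSpace ℝ E]

theorem rpow_eq_rpow_sub_two_mul_sq {a : ℝ} (ha : 0 < a) (r : ℝ) : a ^ r = a ^ (r - 2) * a ^ 2 := by
  rw [← Real.rpow_add_natCast ha.ne']
  norm_num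

theorem rpow_sub_one_eq_rpow_sub_two_mul {a : ℝ} (ha : 0 < a) (r : ℝ) :
    a ^ (r - 1) = a ^ (r - 2) * a := by
  rw [← Real.rpow_add_one ha.ne']
  ring_nf

theorem neg_mul_norm_sq_le_inner_add_norm_sq {k q : ℝ} (hq : 1 < q) (a b : ℝ) (v w : E) :
    -(k * (k - 1 + (1 + k / (q - 1))) * b ^ 2 * ‖v‖ ^ 2)
      ≤ 2 * k * q * (a * b) * ⟪v, w⟫ + q * (q - 1) * a ^ 2 * ‖w‖ ^ 2 := by
  have hq1 : 0 < q - 1 := sub_pos.2 hq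
  have hsq : 0 ≤ q * (q - 1) * ‖a • w + (k / (q - 1) * b) • v‖ ^ 2 := by positivity
  rw [norm_add_sq_real, real_inner_smul_left, real_inner_smul_right, norm_smul, norm_smul,
    mul_pow, mul_pow, Real.norm_eq_abs, Real.norm_eq_abs, sq_abs, sq_abs, real_inner_comm] at hsq
  have hexpand : q * (q - 1) * (a ^ 2 * ‖w‖ ^ 2 + 2 * (a * (k / (q - 1) * b * ⟪v, w⟫))
        + (k / (q - 1) * b) ^ 2 * ‖v‖ ^ 2)
      = q * (q - 1) * a ^ 2 * ‖w‖ ^ 2 + 2 * k * q * (a * b) * ⟪v, w⟫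
        + k * (k - 1 + (1 + k / (q - 1))) * b ^ 2 * ‖v‖ ^ 2 := by
    field_simp
    ring
  linarith

variable [FiniteDimensional ℝ E]

theorem gradient_rpow {g : E → ℝ} {x : E} (hg : DifferentiableAt ℝ g x) (hx : 0 < g x) (q : ℝ) :
    ∇ (fun y ↦ g y ^ q) x = (q * g x ^ (q - 1)) • ∇ g x := by
  refine HasGradientAt.gradient (hasGradientAt_iff_hasFDerivAt.2 ?_)
  rw [map_smul, toDual_gradient]
  exact hg.hasFDerivAt.rpow_const (Or.inl hx.ne')

theorem laplacian_rpow_mul_rpow {χ g : E → ℝ} {x : E} (hχ : ContDiffAt ℝ 2 χ x)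
    (hg : ContDiffAt ℝ 2 g x) (hχx : 0 < χ x) (hgx : 0 < g x) (k q : ℝ) :
    Δ (fun y ↦ χ y ^ k * g y ^ q) x = χ x ^ (k - 2) * g x ^ (q - 2) *
      (k * (k - 1) * g x ^ 2 * ‖∇ χ x‖ ^ 2 + k * χ x * g x ^ 2 * Δ χ x
        + 2 * k * q * (χ x * g x) * ⟪∇ χ x, ∇ g x⟫
        + q * (q - 1) * χ x ^ 2 * ‖∇ g x‖ ^ 2 + q * χ x ^ 2 * g x * Δ g x) := by
  rw [laplacian_mul (hχ.rpow_const_of_ne hχx.ne') (hg.rpow_const_of_ne hgx.ne'),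
    gradient_rpow (hχ.differentiableAt two_ne_zero) hχx,
    gradient_rpow (hg.differentiableAt two_ne_zero) hgx,
    laplacian_rpow k hχ hχx, laplacian_rpow q hg hgx, real_inner_smul_left, real_inner_smul_right]
  rw [rpow_sub_one_eq_rpow_sub_two_mul hχx, rpow_eq_rpow_sub_two_mul_sq hχx k,
    rpow_sub_one_eq_rpow_sub_two_mul hgx, rpow_eq_rpow_sub_two_mul_sq hgx q]
  ring

theorem sub_le_laplacian_rpow_mul_rpow {χ g : E → ℝ} {x : E} {k q : ℝ} (hχ : ContDiffAt ℝ 2 χ x)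
    (hg : ContDiffAt ℝ 2 g x) (hχx : 0 < χ x) (hχx₁ : χ x ≤ 1) (hgx : 0 < g x) (hk : 0 < k)
    (hq : 1 < q) :
    χ x ^ k * (q * g x ^ (q - 1) * Δ g x)
      - k * (1 + k / (q - 1)) * (‖∇ χ x‖ ^ 2 + |Δ χ x|) * (χ x ^ (k - 2) * g x ^ q)
      ≤ Δ (fun y ↦ χ y ^ k * g y ^ q) x := by
  have hΔ : -((1 + k / (q - 1)) * |Δ χ x|) ≤ χ x * Δ χ x := by
    have hlow : χ x * -|Δ χ x| ≤ χ x * Δ χ x := mul_le_mul_of_nonneg_left (neg_abs_le _) hχx.le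
    have hone : χ x ≤ 1 + k / (q - 1) :=
      hχx₁.trans (le_add_of_nonneg_right (div_pos hk (sub_pos.2 hq)).le)
    linarith [mul_le_mul_of_nonneg_right hone (abs_nonneg (Δ χ x))]
  have hbracket : q * χ x ^ 2 * g x * Δ g x
      - k * (1 + k / (q - 1)) * (‖∇ χ x‖ ^ 2 + |Δ χ x|) * g x ^ 2
      ≤ k * (k - 1) * g x ^ 2 * ‖∇ χ x‖ ^ 2 + k * χ x * g x ^ 2 * Δ χ x
        + 2 * k * q * (χ x * g x) * ⟪∇ χ x, ∇ g x⟫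
        + q * (q - 1) * χ x ^ 2 * ‖∇ g x‖ ^ 2 + q * χ x ^ 2 * g x * Δ g x := by
    linarith [mul_le_mul_of_nonneg_left hΔ (mul_nonneg hk.le (sq_nonneg (g x))),
      neg_mul_norm_sq_le_inner_add_norm_sq (k := k) hq (χ x) (g x) (∇ χ x) (∇ g x)]
  rw [laplacian_rpow_mul_rpow hχ hg hχx hgx]
  refine le_trans (le_of_eq ?_) (mul_le_mul_of_nonneg_left hbracket
    (mul_pos (Real.rpow_pos_of_pos hχx (k - 2)) (Real.rpow_pos_of_pos hgx (q - 2))).le)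
  rw [rpow_eq_rpow_sub_two_mul_sq hχx k, rpow_sub_one_eq_rpow_sub_two_mul hgx,
    rpow_eq_rpow_sub_two_mul_sq hgx q]
  ring

/-- The Friedman–McLeod function `u(t + s, x) - u(t, x) - η χ(x)ᵏ u(t, x)^q`, whose sign compares
`u_t` with `u ^ q` where `χ = 1`; the increment replaces `s u_t`, which need not be
differentiable. -/
noncomputable def friedmanMcLeod (u : ℝ → E → ℝ) (χ : E → ℝ) (k q s η t : ℝ) (x : E) : ℝ :=
  u (t + s) x - u t x - η * (χ x ^ k * u t x ^ q)

theorem mul_rpow_mul_rpow_le_of_superlinear {X U k q p k₂ C d F : ℝ} (hX : 0 < X) (hU : 0 < U)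
    (hsup : k₂ * U ^ p ≤ U * d - q * F) (hC : C ≤ k₂ * (X ^ 2 * U ^ (p - 1))) :
    C * (X ^ (k - 2) * U ^ q) ≤ X ^ k * U ^ (q - 1) * (U * d - q * F) := by
  have hpow : ∀ r : ℝ, U ^ r = U ^ (r - 1) * U := fun r ↦ by
    rw [← Real.rpow_add_one hU.ne', sub_add_cancel]
  have hA : 0 < X ^ (k - 2) * (U ^ (q - 1) * U) := by positivity
  have hB : 0 < X ^ (k - 2) * X ^ 2 * U ^ (q - 1) := by positivity
  rw [hpow p] at hsup
  rw [rpow_eq_rpow_sub_two_mul_sq hX k, hpow q]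
  linarith [mul_le_mul_of_nonneg_right hC hA.le, mul_le_mul_of_nonneg_left hsup hB.le]

variable {Ω K : Set E} {V χ : E → ℝ} {u : ℝ → E → ℝ} {f : ℝ → ℝ} {T t s k q p η N C k₂ L : ℝ}
  {x : E}

namespace IsMonotoneSolution

theorem hasDerivAt_friedmanMcLeod (h : IsMonotoneSolution Ω T f V u) (ht : t ∈ Ioo 0 T)
    (hts : t + s ∈ Ioo 0 T) (hx : x ∈ Ω) (hu : 0 < u t x) :
    HasDerivAt (fun τ ↦ friedmanMcLeod u χ k q s η τ x)
      (Δ (fun y ↦ u (t + s) y - u t y) x + V x * (f (u (t + s) x) - f (u t x))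
        - η * (χ x ^ k * ((Δ (u t) x + V x * f (u t x)) * q * u t x ^ (q - 1)))) t :=
  (h.hasDerivAt_increment ht hts hx).fun_sub
    ((((h.hasDerivAt ht hx).rpow_const (Or.inl hu.ne')).const_mul _).const_mul η)

theorem laplacian_friedmanMcLeod (h : IsMonotoneSolution Ω T f V u) (ht : t ∈ Ioo 0 T)
    (hts : t + s ∈ Ioo 0 T) (hx : x ∈ Ω) (hχ : ContDiffAt ℝ 2 χ x) (hχx : 0 < χ x)
    (hu : 0 < u t x) :
    ContDiffAt ℝ 2 (friedmanMcLeod u χ k q s η t) x ∧ Δ (friedmanMcLeod u χ k q s η t) x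
      = Δ (fun y ↦ u (t + s) y - u t y) x - η * Δ (fun y ↦ χ y ^ k * u t y ^ q) x := by
  have hinc := (h.contDiffAt _ hts x hx).sub (h.contDiffAt t ht x hx)
  have hprod := (hχ.rpow_const_of_ne (p := k) hχx.ne').mul
    ((h.contDiffAt t ht x hx).rpow_const_of_ne (p := q) hu.ne')
  refine ⟨hinc.sub (contDiffAt_const.mul hprod), ?_⟩
  rw [← laplacian_const_mul η hprod]
  exact hinc.laplacian_sub (contDiffAt_const.mul hprod)

theorem friedmanMcLeod_supersolution (h : IsMonotoneSolution Ω T f V u) (hf : ConvexOn ℝ (Ici 0) f)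
    (hd : ∀ s > 0, DifferentiableAt ℝ f s) (hV0 : 0 ≤ V x) (hχ : IsCutoff K Ω V N χ)
    (ht : t ∈ Ioo 0 T) (hts : t + s ∈ Ioo 0 T) (hx : x ∈ Ω) (hχx : 0 < χ x) (hu : 0 < u t x)
    (hk : 0 < k) (hq : 1 < q) (hη : 0 < η)
    (hsup : k₂ * u t x ^ p ≤ u t x * deriv f (u t x) - q * f (u t x))
    (hC : k * (1 + k / (q - 1)) * N ≤ k₂ * (χ x ^ 2 * u t x ^ (p - 1)))
    (hL : V x * deriv f (u t x) < L) (hneg : friedmanMcLeod u χ k q s η t x < 0) :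
    ContDiffAt ℝ 2 (friedmanMcLeod u χ k q s η t) x ∧
      ∃ J', HasDerivAt (fun τ ↦ friedmanMcLeod u χ k q s η τ x) J' t ∧
        L * friedmanMcLeod u χ k q s η t x < J' - Δ (friedmanMcLeod u χ k q s η t) x := by
  have hχd := hχ.contDiff.contDiffAt (x := x)
  obtain ⟨hJd, hJΔ⟩ := h.laplacian_friedmanMcLeod (k := k) (q := q) (η := η) ht hts hx hχd hχx hu
  refine ⟨hJd, _, h.hasDerivAt_friedmanMcLeod ht hts hx hu, hJΔ ▸ ?_⟩
  have : 0 < χ x ^ (k - 2) * u t x ^ q := by positivity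
  have : 0 < q - 1 := sub_pos.2 hq
  have hdiffusion := sub_le_laplacian_rpow_mul_rpow hχd (h.contDiffAt t ht x hx) hχx (hχ.le_one x)
    hu hk hq
  have herror : k * (1 + k / (q - 1)) * (‖∇ χ x‖ ^ 2 + |Δ χ x|) * (χ x ^ (k - 2) * u t x ^ q)
      ≤ V x * (χ x ^ k * u t x ^ (q - 1) * (u t x * deriv f (u t x) - q * f (u t x))) := by
    have hN := mul_le_mul_of_nonneg_left (hχ.norm_gradient_sq_add_abs_laplacian_le x hx)
      (by positivity : 0 ≤ k * (1 + k / (q - 1)) * (χ x ^ (k - 2) * u t x ^ q))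
    linarith [mul_le_mul_of_nonneg_left
      (mul_rpow_mul_rpow_le_of_superlinear (k := k) hχx hu hsup hC) hV0]
  have htangent := mul_le_mul_of_nonneg_left
    (deriv_mul_sub_le_of_convexOn_Ici hf (h.nonneg _ hts x hx) hu (hd _ hu)) hV0
  have hstrict := mul_lt_mul_of_neg_right hL hneg
  have hpow : u t x ^ q = u t x ^ (q - 1) * u t x := by
    rw [← Real.rpow_add_one hu.ne', sub_add_cancel]
  have hexpand : V x * deriv f (u t x) * friedmanMcLeod u χ k q s η t x
      = V x * (deriv f (u t x) * (u (t + s) x - u t x))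
        - η * (V x * (χ x ^ k * u t x ^ (q - 1) * (u t x * deriv f (u t x)))) := by
    rw [friedmanMcLeod, hpow]
    ring
  linarith [mul_le_mul_of_nonneg_left (hdiffusion.trans' (sub_le_sub_left herror _)) hη.le]

end IsMonotoneSolution

end FriedmanMcLeod

section LowerBound

theorem exists_pos_forall_of_lt_mul_rpow_mul_rpow {c p q : ℝ} (hc : 0 < c) (hp : 1 < p)
    (hq : 0 < q) (S B : ℝ) :
    ∃ δ > 0, ∀ X U : ℝ, 0 ≤ X → X ≤ 1 → 0 ≤ U → c < δ * (X ^ (2 * q / (p - 1)) * U ^ q) →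
      0 < X ∧ S < U ∧ B < X ^ 2 * U ^ (p - 1) := by
  have hp1 : 0 < p - 1 := sub_pos.2 hp
  have hr : 0 < q / (p - 1) := by positivity
  have hk : 0 < 2 * q / (p - 1) := by positivity
  have hS : 0 ≤ |S| ^ q := by positivity
  have hB : 0 ≤ |B| ^ (q / (p - 1)) := by positivity
  have hD : 0 < |S| ^ q + |B| ^ (q / (p - 1)) + 1 := by positivity
  refine ⟨c / (|S| ^ q + |B| ^ (q / (p - 1)) + 1), by positivity, fun X U hX hX1 hU hlt ↦ ?_⟩
  rw [div_mul_eq_mul_div, lt_div_iff₀ hD, mul_lt_mul_iff_right₀ hc] at hlt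
  have hw : X ^ (2 * q / (p - 1)) * U ^ q = (X ^ 2 * U ^ (p - 1)) ^ (q / (p - 1)) := by
    rw [Real.mul_rpow (by positivity) (by positivity), ← Real.rpow_natCast_mul hX,
      ← Real.rpow_mul hU, mul_div_cancel₀ _ hp1.ne', Nat.cast_ofNat, mul_div_assoc]
  refine ⟨hX.lt_of_ne' fun h0 ↦ ?_, (le_abs_self S).trans_lt ?_, (le_abs_self B).trans_lt ?_⟩
  · rw [h0, Real.zero_rpow hk.ne'] at hlt
    linarith
  · have := mul_le_of_le_one_left (Real.rpow_nonneg hU q) (Real.rpow_le_one hX hX1 hk.le)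
    refine (Real.rpow_lt_rpow_iff (abs_nonneg S) hU hq).1 ?_
    linarith
  · refine (Real.rpow_lt_rpow_iff (abs_nonneg B) (by positivity) hr).1 ?_
    linarith

theorem exists_forall_mul_deriv_lt {X : Type*} [TopologicalSpace X] {V : X → ℝ} {A : Set X}
    {f : ℝ → ℝ} (hA : IsCompact A) (hV : ContinuousOn V A) (hV0 : ∀ x ∈ A, 0 ≤ V x)
    (hf : ConvexOn ℝ (Ici 0) f) (hd : ∀ s > 0, DifferentiableAt ℝ f s) (m : ℝ) :
    ∃ L, ∀ x ∈ A, ∀ b > 0, b ≤ m → V x * deriv f b < L := by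
  obtain ⟨M, hM⟩ := hA.bddAbove_image hV
  refine ⟨M * |deriv f m| + 1, fun x hx b hb hbm ↦ ?_⟩
  have hVM : V x ≤ M := hM (mem_image_of_mem V hx)
  have hmono : deriv f b ≤ |deriv f m| :=
    ((hf.subset Ioi_subset_Ici_self (convex_Ioi 0)).monotoneOn_deriv hd hb
      (hb.trans_le hbm) hbm).trans (le_abs_self _)
  linarith [mul_le_mul_of_nonneg_left hmono (hV0 x hx),
    mul_le_mul_of_nonneg_right hVM (abs_nonneg (deriv f m))]

variable {E : Type*} [NormedAddCommGroup E] [InnerProductSpace ℝ E] [FiniteDimensional ℝ E]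
  {Ω K : Set E} {V χ : E → ℝ} {u : ℝ → E → ℝ} {f : ℝ → ℝ} {T a b s k q p δ N C k₂ : ℝ}

namespace IsMonotoneSolution

theorem friedmanMcLeod_nonneg (h : IsMonotoneSolution Ω T f V u) (hΩ : IsOpen Ω)
    (hf : ConvexOn ℝ (Ici 0) f) (hd : ∀ s > 0, DifferentiableAt ℝ f s) (hV : ContinuousOn V Ω)
    (hV0 : ∀ x ∈ Ω, 0 ≤ V x) (hχ : IsCutoff K Ω V N χ) (ha : 0 < a) (hab : a ≤ b) (hs : 0 < s)
    (hbs : b + s < T) (hk : 0 < k) (hq : 1 < q) (hδ : 0 < δ)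
    (hneg : ∀ t ∈ Icc a b, ∀ x ∈ tsupport χ, friedmanMcLeod u χ k q s (δ * s) t x < 0 →
      a < t ∧ 0 < χ x ∧ 0 < u t x ∧
      k₂ * u t x ^ p ≤ u t x * deriv f (u t x) - q * f (u t x) ∧
      k * (1 + k / (q - 1)) * N ≤ k₂ * (χ x ^ 2 * u t x ^ (p - 1))) :
    ∀ t ∈ Icc a b, ∀ x ∈ tsupport χ, 0 ≤ friedmanMcLeod u χ k q s (δ * s) t x := by
  have hA : IsCompact (tsupport χ) := hχ.hasCompactSupport
  have htT : ∀ t ∈ Icc a b, t ∈ Ioo 0 T ∧ t + s ∈ Ioo 0 T := fun t ht ↦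
    ⟨⟨ha.trans_le ht.1, by linarith [ht.2]⟩, ⟨by linarith [ht.1], by linarith [ht.2]⟩⟩
  have hu : ContinuousOn (Function.uncurry u) (Icc a b ×ˢ tsupport χ) :=
    (h.continuousOn_uncurry hΩ).mono
      (prod_mono (fun t ht ↦ (htT t ht).1) hχ.tsupport_subset)
  obtain ⟨m, hm⟩ := (isCompact_Icc.prod hA).bddAbove_image hu
  obtain ⟨L, hL⟩ := exists_forall_mul_deriv_lt hA (hV.mono hχ.tsupport_subset)
    (fun x hx ↦ hV0 x (hχ.tsupport_subset hx)) hf hd m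
  have hJ : ContinuousOn (Function.uncurry (friedmanMcLeod u χ k q s (δ * s)))
      (Icc a b ×ˢ tsupport χ) := by
    have hχc : Continuous fun z : ℝ × E ↦ χ z.2 ^ k :=
      (hχ.contDiff.continuous.comp continuous_snd).rpow_const fun _ ↦ Or.inr hk.le
    have huq : ContinuousOn (fun z ↦ Function.uncurry u z ^ q) (Icc a b ×ˢ tsupport χ) :=
      hu.rpow_const fun _ _ ↦ Or.inr (by linarith)
    exact ((h.continuousOn_increment hΩ).mono fun z hz ↦
      ⟨(htT _ hz.1).1, (htT _ hz.1).2, hχ.tsupport_subset hz.2⟩).sub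
      (continuousOn_const.mul (hχc.continuousOn.mul huq))
  refine nonneg_of_parabolic_supersolution_cylinder (L := L) hA hJ ?_ ?_ ?_
  · intro x hx
    by_contra! hlt
    exact (hneg a (left_mem_Icc.2 hab) x hx hlt).1.false
  · intro t ht x hx
    by_contra! hlt
    have hx' := (isClosed_tsupport χ).frontier_subset hx
    have hsupp : x ∈ Function.support χ := (hneg t ht x hx' hlt).2.1.ne'
    exact hx.2 (interior_maximal subset_closure hχ.contDiff.continuous.isOpen_support hsupp)
  · intro t ht x hx hlt
    have hx' := interior_subset hx
    have ht' := Ioc_subset_Icc_self ht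
    obtain ⟨-, hχx, hux, hsup, hC⟩ := hneg t ht' x hx' hlt
    have hxΩ := hχ.tsupport_subset hx'
    have hum : u t x ≤ m := hm (mem_image_of_mem (Function.uncurry u) (mk_mem_prod ht' hx'))
    exact h.friedmanMcLeod_supersolution hf hd (hV0 x hxΩ) hχ (htT t ht').1 (htT t ht').2 hxΩ hχx
      hux hk hq (mul_pos hδ hs) hsup hC (hL x hx' _ hux hum) hlt

theorem exists_forall_friedmanMcLeod_nonneg (h : IsMonotoneSolution Ω T f V u) (hΩ : IsOpen Ω)
    (hT : 0 < T) (hf : ConvexOn ℝ (Ici 0) f) (hd : ∀ s > 0, DifferentiableAt ℝ f s)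
    (hlim : Tendsto (fun s : ℝ ↦ s ^ (-p) * f s) atTop (𝓝 1)) (hV : ContinuousOn V Ω)
    (hV0 : ∀ x ∈ Ω, 0 ≤ V x) (hq : 1 < q) (hqp : q < p) (hχ : IsCutoff K Ω V N χ)
    (hinc : UniformlyIncreasingOn u T (tsupport χ)) :
    ∃ k, ∃ δ > 0, ∃ a ∈ Ioo 0 T, ∀ t ∈ Ico a T, ∀ s > 0, t + s < T → ∀ x ∈ tsupport χ,
      0 ≤ friedmanMcLeod u χ k q s (δ * s) t x := by
  have hp : 0 < p - 1 := sub_pos.2 (hq.trans hqp)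
  have hχΩ := hχ.tsupport_subset
  obtain ⟨k₂, hk₂, hsup⟩ := exists_eventually_mul_rpow_le_mul_deriv_sub hqp hf hd hlim
  obtain ⟨S, hS⟩ := eventually_atTop.1 hsup
  obtain ⟨c, hc, hct⟩ := h.eventually_mul_le_increment hinc hχΩ hT
  obtain ⟨t₀, ht₀, ht₀c⟩ :=
    (nhdsLT_basis_of_exists_lt ⟨0, hT⟩).eventually_iff.1 (hct.and (Ioo_mem_nhdsLT hT))
  obtain ⟨a, hta, haT⟩ := exists_between ht₀
  have ha : a ∈ Ioo 0 T := (ht₀c ⟨hta, haT⟩).2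
  obtain ⟨m, hm⟩ := (show IsCompact (tsupport χ) from hχ.hasCompactSupport).bddAbove_image
    fun x hx ↦ (h.contDiffAt a ha x (hχΩ hx)).continuousAt.continuousWithinAt
  obtain ⟨δ, hδ, hδc⟩ := exists_pos_forall_of_lt_mul_rpow_mul_rpow hc (hq.trans hqp)
    (zero_lt_one.trans hq) (max (max S m) 0)
    (2 * q / (p - 1) * (1 + 2 * q / (p - 1) / (q - 1)) * N / k₂)
  refine ⟨2 * q / (p - 1), δ, hδ, a, ha, fun b hb s hs hbs ↦ ?_⟩
  refine h.friedmanMcLeod_nonneg (p := p) (k₂ := k₂) hΩ hf hd hV hV0 hχ ha.1 hb.1 hs hbs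
    (by positivity) hq hδ (fun t ht y hy hlt ↦ ?_) b (right_mem_Icc.2 hb.1)
  have htT : t ∈ Ioo 0 T := ⟨ha.1.trans_le ht.1, ht.2.trans_lt hb.2⟩
  have hcs := (ht₀c ⟨hta.trans_le ht.1, htT.2⟩).1 s hs (by linarith [ht.2]) y hy
  have hlarge : c < δ * (χ y ^ (2 * q / (p - 1)) * u t y ^ q) := by
    rw [friedmanMcLeod] at hlt
    refine lt_of_mul_lt_mul_right ?_ hs.le
    linarith
  obtain ⟨hχy, huy, hw⟩ :=
    hδc _ _ (hχ.nonneg y) (hχ.le_one y) (h.nonneg t htT y (hχΩ hy)) hlarge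
  rw [max_lt_iff, max_lt_iff] at huy
  refine ⟨ht.1.lt_of_ne ?_, hχy, huy.2, hS _ huy.1.1.le, ((div_lt_iff₀' hk₂).1 hw).le⟩
  rintro rfl
  exact huy.1.2.not_ge (hm (mem_image_of_mem _ hy))

theorem exists_mul_rpow_le_deriv (h : IsMonotoneSolution Ω T f V u) (hΩ : IsOpen Ω) (hT : 0 < T)
    (hf : ConvexOn ℝ (Ici 0) f) (hd : ∀ s > 0, DifferentiableAt ℝ f s)
    (hlim : Tendsto (fun s : ℝ ↦ s ^ (-p) * f s) atTop (𝓝 1)) (hV : ContinuousOn V Ω)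
    (hV0 : ∀ x ∈ Ω, 0 ≤ V x) (hq : 1 < q) (hqp : q < p)
    (hinc : ∀ A ⊆ Ω, IsCompact A → UniformlyIncreasingOn u T A) (hK : IsCompact K) (hKΩ : K ⊆ Ω)
    (hVK : ∀ x ∈ frontier K, 0 < V x) :
    ∃ δ > 0, ∀ᶠ t in 𝓝[<] T, ∀ x ∈ K, δ * u t x ^ q ≤ deriv (fun s ↦ u s x) t := by
  obtain ⟨N, χ, hχ⟩ := exists_isCutoff hK hΩ hKΩ hV hV0 hVK
  obtain ⟨k, δ, hδ, a, ha, hJ⟩ := h.exists_forall_friedmanMcLeod_nonneg hΩ hT hf hd hlim hV hV0 hq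
    hqp hχ (hinc _ hχ.tsupport_subset hχ.hasCompactSupport)
  refine ⟨δ, hδ, ?_⟩
  filter_upwards [Ioo_mem_nhdsLT ha.2] with t ht x hx
  have htT : t ∈ Ioo 0 T := ⟨ha.1.trans ht.1, ht.2⟩
  refine le_deriv_of_eventually_mul_le (h.differentiableAt t htT x (hKΩ hx)) ?_
  filter_upwards [Ioo_mem_nhdsGT (sub_pos.2 ht.2)] with s hs
  have hxχ : x ∈ tsupport χ :=
    subset_tsupport χ (by rw [Function.mem_support, hχ.eq_one x hx]; exact one_ne_zero)
  have := hJ t ⟨ht.1.le, ht.2⟩ s hs.1 (by linarith [hs.2]) x hxχ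
  rw [friedmanMcLeod, hχ.eq_one x hx, Real.one_rpow, one_mul] at this
  linarith

end IsMonotoneSolution

end LowerBound

section BlowupRate

theorem mul_sub_le_rpow_one_sub_of_mul_rpow_le_deriv {v : ℝ → ℝ} {a b δ q : ℝ} (hq : 1 < q)
    (hab : a ≤ b) (hv : ∀ t ∈ Icc a b, 0 < v t) (hd : ∀ t ∈ Icc a b, DifferentiableAt ℝ v t)
    (hvq : ∀ t ∈ Icc a b, δ * v t ^ q ≤ deriv v t) :
    (q - 1) * δ * (b - a) ≤ v a ^ (1 - q) := by
  have hder : ∀ t ∈ Icc a b,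
      HasDerivAt (fun s ↦ v s ^ (1 - q)) (deriv v t * (1 - q) * v t ^ (-q)) t := fun t ht ↦ by
    simpa only [sub_sub_cancel_left] using
      (hd t ht).hasDerivAt.rpow_const (p := 1 - q) (Or.inl (hv t ht).ne')
  have hle : ∀ t ∈ interior (Icc a b), deriv (fun s ↦ v s ^ (1 - q)) t ≤ -((q - 1) * δ) := by
    intro t ht
    have ht' := interior_subset ht
    have hone : v t ^ q * v t ^ (-q) = 1 := by
      rw [← Real.rpow_add (hv t ht'), add_neg_cancel, Real.rpow_zero]
    have hmul := mul_le_mul_of_nonneg_right (hvq t ht')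
      (mul_nonneg (sub_nonneg.2 hq.le) (Real.rpow_nonneg (hv t ht').le (-q)))
    rw [(hder t ht').deriv]
    linear_combination hmul - (q - 1) * δ * hone
  have hmean := (convex_Icc a b).image_sub_le_mul_sub_of_deriv_le
    (fun t ht ↦ (hder t ht).continuousAt.continuousWithinAt)
    (fun t ht ↦ (hder t (interior_subset ht)).differentiableAt.differentiableWithinAt) hle
    a (left_mem_Icc.2 hab) b (right_mem_Icc.2 hab) hab
  have := Real.rpow_nonneg (hv b (right_mem_Icc.2 hab)).le (1 - q)
  linarith

theorem le_rpow_of_mul_rpow_le_deriv {v : ℝ → ℝ} {t T δ q : ℝ} (hq : 1 < q) (hδ : 0 < δ)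
    (ht : t < T) (hv : ∀ s ∈ Ico t T, 0 ≤ v s) (hd : ∀ s ∈ Ico t T, DifferentiableAt ℝ v s)
    (hvq : ∀ s ∈ Ico t T, δ * v s ^ q ≤ deriv v s) :
    v t ≤ ((q - 1) * δ * (T - t)) ^ (-(q - 1)⁻¹) := by
  have hq1 : 0 < q - 1 := sub_pos.2 hq
  have : 0 < T - t := sub_pos.2 ht
  rcases (hv t (left_mem_Ico.2 ht)).eq_or_lt with h0 | h0
  · rw [← h0]
    positivity
  have hmono : MonotoneOn v (Ico t T) :=
    monotoneOn_of_deriv_nonneg (convex_Ico t T)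
      (fun s hs ↦ (hd s hs).continuousAt.continuousWithinAt)
      (fun s hs ↦ (hd s (interior_subset hs)).differentiableWithinAt) fun s hs ↦
        (hvq s (interior_subset hs)).trans'
          (mul_nonneg hδ.le (Real.rpow_nonneg (hv s (interior_subset hs)) q))
  have hbound : ∀ b ∈ Ioo t T, (q - 1) * δ * (b - t) ≤ v t ^ (1 - q) := fun b hb ↦ by
    have hsub : Icc t b ⊆ Ico t T := Icc_subset_Ico_right hb.2
    exact mul_sub_le_rpow_one_sub_of_mul_rpow_le_deriv hq hb.1.le
      (fun s hs ↦ h0.trans_le (hmono (left_mem_Ico.2 ht) (hsub hs) hs.1))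
      (fun s hs ↦ hd s (hsub hs)) fun s hs ↦ hvq s (hsub hs)
  have hlim : (q - 1) * δ * (T - t) ≤ v t ^ (1 - q) :=
    le_of_tendsto ((by fun_prop : Continuous fun b ↦ (q - 1) * δ * (b - t)).continuousWithinAt
      (s := Iio T)) (mem_of_superset (Ioo_mem_nhdsLT ht) hbound)
  calc v t = (v t ^ (1 - q)) ^ (-(q - 1)⁻¹) := by
        rw [← Real.rpow_mul h0.le, ← neg_sub q 1, neg_mul_neg, mul_inv_cancel₀ hq1.ne',
          Real.rpow_one]
    _ ≤ ((q - 1) * δ * (T - t)) ^ (-(q - 1)⁻¹) :=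
        Real.rpow_le_rpow_of_nonpos (by positivity) hlim (by simpa using hq.le)

variable {E : Type*} [NormedAddCommGroup E] [InnerProductSpace ℝ E] [FiniteDimensional ℝ E]
  {Ω A : Set E} {V : E → ℝ} {u : ℝ → E → ℝ} {f : ℝ → ℝ} {T δ q : ℝ}

theorem IsMonotoneSolution.exists_le_mul_rpow_neg (h : IsMonotoneSolution Ω T f V u) (hT : 0 < T)
    (hA : A ⊆ Ω) (hq : 1 < q) (hδ : 0 < δ)
    (hu : ∀ᶠ t in 𝓝[<] T, ∀ x ∈ A, δ * u t x ^ q ≤ deriv (fun s ↦ u s x) t) :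
    ∃ K, ∀ᶠ t in 𝓝[<] T, ∀ x ∈ A, u t x ≤ K * (T - t) ^ (-(q - 1)⁻¹) := by
  obtain ⟨t₀, ht₀, hu'⟩ := (nhdsLT_basis_of_exists_lt ⟨0, hT⟩).eventually_iff.1
    (hu.and (Ioo_mem_nhdsLT hT))
  have : 0 < q - 1 := sub_pos.2 hq
  refine ⟨((q - 1) * δ) ^ (-(q - 1)⁻¹), ?_⟩
  filter_upwards [Ioo_mem_nhdsLT ht₀] with t ht x hx
  have hmem : ∀ s ∈ Ico t T, s ∈ Ioo t₀ T := fun s hs ↦ ⟨ht.1.trans_le hs.1, hs.2⟩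
  rw [← Real.mul_rpow (by positivity) (sub_pos.2 ht.2).le]
  exact le_rpow_of_mul_rpow_le_deriv (v := fun s ↦ u s x) hq hδ ht.2
    (fun s hs ↦ h.nonneg s (hu' (hmem s hs)).2 x (hA hx))
    (fun s hs ↦ h.differentiableAt s (hu' (hmem s hs)).2 x (hA hx))
    fun s hs ↦ (hu' (hmem s hs)).1 x hx

end BlowupRate

section Barrier

theorem eventually_exists_mul_le_sq_and_mul_rpow_lt {κ β d : ℝ} (hκ : 0 < κ) (hκβ : 2 * κ < β)
    (hd : 0 < d) (A B : ℝ) :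
    ∀ᶠ τ in 𝓝[>] (0 : ℝ), ∃ ρ ∈ Ioc 0 d, A * τ ≤ ρ ^ 2 ∧ B * ρ ^ β < τ ^ κ := by
  have hβ : 0 < β := by linarith
  obtain ⟨θ, hκθ, hθ⟩ := exists_between (show κ / β < 1 / 2 by
    rw [div_lt_div_iff₀ hβ two_pos]; linarith)
  have hsmall : ∀ r > (0 : ℝ), ∀ C : ℝ, ∀ ε > 0, ∀ᶠ τ in 𝓝[>] (0 : ℝ), C * τ ^ r < ε := by
    intro r hr C ε hε
    have hcont : Tendsto (fun τ : ℝ ↦ C * τ ^ r) (𝓝 0) (𝓝 (C * 0 ^ r)) :=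
      (Real.continuousAt_rpow_const 0 r (Or.inr hr.le)).const_mul C
    rw [Real.zero_rpow hr.ne', mul_zero] at hcont
    exact (hcont.mono_left nhdsWithin_le_nhds).eventually (gt_mem_nhds hε)
  have hθ0 : 0 < θ := (div_pos hκ hβ).trans hκθ
  filter_upwards [self_mem_nhdsWithin, hsmall θ hθ0 1 d hd,
    hsmall (1 - 2 * θ) (by linarith) A 1 one_pos,
    hsmall (θ * β - κ) (sub_pos.2 ((div_lt_iff₀ hβ).1 hκθ)) B 1 one_pos] with τ hτ hτd hτA hτB
  have hτ : 0 < τ := hτ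
  refine ⟨τ ^ θ, ⟨by positivity, by linarith⟩, ?_, ?_⟩
  · calc A * τ = A * τ ^ (1 - 2 * θ) * τ ^ (2 * θ) := by
          rw [mul_assoc, ← Real.rpow_add hτ, sub_add_cancel, Real.rpow_one]
      _ ≤ 1 * τ ^ (2 * θ) := by gcongr
      _ = (τ ^ θ) ^ 2 := by rw [one_mul, ← Real.rpow_mul_natCast hτ.le, mul_comm θ, Nat.cast_ofNat]
  · calc B * (τ ^ θ) ^ β = B * τ ^ (θ * β - κ) * τ ^ κ := by
          rw [mul_assoc, ← Real.rpow_add hτ, sub_add_cancel, Real.rpow_mul hτ.le]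
      _ < 1 * τ ^ κ := by gcongr
      _ = τ ^ κ := one_mul _

theorem const_mul_rpow_neg_rpow_le {L m p κ σ y : ℝ} (hL : 0 ≤ L) (hκ : 0 ≤ κ)
    (hm : m * (p - 1) = 2 + 2 * κ) (hσ : 0 < σ) (hy : √σ ≤ y) :
    (L * y ^ (-m)) ^ p ≤ L ^ p * (y ^ (-m - 2) * σ ^ (-κ)) := by
  have hy0 : 0 < y := (Real.sqrt_pos.2 hσ).trans_le hy
  have hle : y ^ (-(2 * κ)) ≤ σ ^ (-κ) :=
    calc y ^ (-(2 * κ)) ≤ √σ ^ (-(2 * κ)) :=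
          Real.rpow_le_rpow_of_nonpos (Real.sqrt_pos.2 hσ) hy (by linarith)
      _ = σ ^ (-κ) := by
          rw [Real.sqrt_eq_rpow, ← Real.rpow_mul hσ.le]
          ring_nf
  calc (L * y ^ (-m)) ^ p = L ^ p * (y ^ (-m - 2) * y ^ (-(2 * κ))) := by
        rw [Real.mul_rpow hL (by positivity), ← Real.rpow_mul hy0.le, ← Real.rpow_add hy0]
        congr 2
        linear_combination -hm
    _ ≤ L ^ p * (y ^ (-m - 2) * σ ^ (-κ)) := by gcongr

variable {E : Type*} [NormedAddCommGroup E]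

/-- The function `y` for which `L * max y √σ ^ (-m)` is a supersolution near `x₀`, where `σ` is the
remaining time until blowup in units of the length `τ` of the time interval considered. -/
noncomputable def barrier (κ ρ : ℝ) (x₀ : E) (σ : ℝ) (x : E) : ℝ :=
  (σ ^ (1 / 2 - κ) + 1) / 2 - ‖x - x₀‖ ^ 2 / ρ ^ 2

variable {κ ρ σ τ m L : ℝ} {x₀ x : E}

theorem barrier_le_one (hκ : κ ≤ 1 / 2) (hσ : 0 ≤ σ) (hσ1 : σ ≤ 1) : barrier κ ρ x₀ σ x ≤ 1 := by
  have := Real.rpow_le_one hσ hσ1 (sub_nonneg.2 hκ)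
  have : 0 ≤ ‖x - x₀‖ ^ 2 / ρ ^ 2 := by positivity
  rw [barrier]
  linarith

theorem barrier_nonpos_of_norm_eq (hκ : κ ≤ 1 / 2) (hρ : 0 < ρ) (hσ : 0 ≤ σ) (hσ1 : σ ≤ 1)
    (hx : ‖x - x₀‖ = ρ) : barrier κ ρ x₀ σ x ≤ 0 := by
  have := Real.rpow_le_one hσ hσ1 (sub_nonneg.2 hκ)
  rw [barrier, hx, div_self (by positivity)]
  linarith

theorem one_quarter_le_barrier (hρ : 0 < ρ) (hσ : 0 ≤ σ) (hx : ‖x - x₀‖ ≤ ρ / 2) :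
    1 / 4 ≤ barrier κ ρ x₀ σ x := by
  have := Real.rpow_nonneg hσ (1 / 2 - κ)
  have : ‖x - x₀‖ ^ 2 / ρ ^ 2 ≤ 1 / 4 := by
    rw [div_le_iff₀ (by positivity)]
    linarith [pow_le_pow_left₀ (norm_nonneg _) hx 2]
  rw [barrier]
  linarith

theorem continuous_barrier (hκ : κ ≤ 1 / 2) :
    Continuous fun z : ℝ × E ↦ barrier κ ρ x₀ z.1 z.2 := by
  have : Continuous fun z : ℝ × E ↦ z.1 ^ (1 / 2 - κ) :=
    continuous_fst.rpow_const fun _ ↦ Or.inr (sub_nonneg.2 hκ)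
  unfold barrier
  fun_prop

theorem hasDerivAt_barrier (hσ : 0 < σ) :
    HasDerivAt (fun s ↦ barrier κ ρ x₀ s x) ((1 / 2 - κ) / 2 * σ ^ (-(1 / 2) - κ)) σ := by
  refine ((((Real.hasDerivAt_rpow_const (Or.inl hσ.ne')).add_const 1).div_const 2).sub_const
    (‖x - x₀‖ ^ 2 / ρ ^ 2)).congr_deriv ?_
  rw [show 1 / 2 - κ - 1 = -(1 / 2) - κ by ring]
  ring

variable [InnerProductSpace ℝ E]

theorem contDiff_barrier : ContDiff ℝ 2 (barrier κ ρ x₀ σ) :=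
  contDiff_const.sub (((contDiff_id.sub contDiff_const).norm_sq ℝ).div_const _)

variable [FiniteDimensional ℝ E]

theorem gradient_barrier : ∇ (barrier κ ρ x₀ σ) x = (-2 / ρ ^ 2) • (x - x₀) := by
  have hsq : DifferentiableAt ℝ (fun z : E ↦ ‖z - x₀‖ ^ 2) x :=
    (differentiableAt_id.sub_const x₀).norm_sq ℝ
  refine HasGradientAt.gradient (hasGradientAt_iff_hasFDerivAt.2 ?_)
  refine (((hsq.hasGradientAt.hasFDerivAt).mul_const (ρ ^ 2)⁻¹).const_sub
    ((σ ^ (1 / 2 - κ) + 1) / 2)).congr_fderiv ?_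
  rw [gradient_norm_sub_sq, ← map_smul, ← map_neg, smul_smul, ← neg_smul]
  congr 2
  ring

theorem laplacian_barrier : Δ (barrier κ ρ x₀ σ) x = -(2 * Module.finrank ℝ E / ρ ^ 2) := by
  have hderiv : deriv (fun r ↦ (σ ^ (1 / 2 - κ) + 1) / 2 - r / ρ ^ 2) = fun _ ↦ -(1 / ρ ^ 2) :=
    funext fun r ↦ (((hasDerivAt_id r).div_const _).const_sub _).deriv
  refine (laplacian_comp_norm_sub_sq (φ := fun r ↦ (σ ^ (1 / 2 - κ) + 1) / 2 - r / ρ ^ 2)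
    (by fun_prop)).trans ?_
  rw [hderiv, deriv_const]
  ring

theorem laplacian_const_mul_rpow_neg {g : E → ℝ} (hg : ContDiffAt ℝ 2 g x) (hx : 0 < g x)
    (L m : ℝ) : Δ (fun y ↦ L * g y ^ (-m)) x
      = L * m * g x ^ (-m - 2) * ((m + 1) * ‖∇ g x‖ ^ 2 - g x * Δ g x) := by
  rw [laplacian_const_mul L (hg.rpow_const_of_ne hx.ne'), laplacian_rpow _ hg hx,
    rpow_sub_one_eq_rpow_sub_two_mul hx]
  ring

/-- The diffusion terms are of size `ρ⁻²`, whereas the time derivative contributes at least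
`σ ^ (-κ) / (8 * τ)`. -/
theorem rpow_neg_div_le_barrier (hκ : 0 < κ) (hκ4 : κ ≤ 1 / 4) (hρ : 0 < ρ) (hτ : 0 < τ)
    (hm : 0 ≤ m) (hσ : 0 < σ) (hσ1 : σ ≤ 1)
    (hsmall : 16 * (4 * (m + 1) + 2 * Module.finrank ℝ E) * τ ≤ ρ ^ 2)
    (hx : ‖x - x₀‖ ≤ ρ) (hy : √σ ≤ barrier κ ρ x₀ σ x) :
    σ ^ (-κ) / (16 * τ) ≤
      barrier κ ρ x₀ σ x * ((1 / 2 - κ) / 2 * σ ^ (-(1 / 2) - κ) / τ)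
        - ((m + 1) * ‖∇ (barrier κ ρ x₀ σ) x‖ ^ 2
          - barrier κ ρ x₀ σ x * Δ (barrier κ ρ x₀ σ) x) := by
  have hy0 := (Real.sqrt_nonneg σ).trans hy
  have htime : σ ^ (-κ) / (8 * τ)
      ≤ barrier κ ρ x₀ σ x * ((1 / 2 - κ) / 2 * σ ^ (-(1 / 2) - κ) / τ) := by
    calc σ ^ (-κ) / (8 * τ) = √σ * (1 / 4 / 2 * σ ^ (-(1 / 2) - κ) / τ) := by
          rw [Real.sqrt_eq_rpow, show -κ = 1 / 2 + (-(1 / 2) - κ) by ring, Real.rpow_add hσ]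
          ring
      _ ≤ _ := by
          gcongr
          linarith
  have hgrad : ‖∇ (barrier κ ρ x₀ σ) x‖ ^ 2 ≤ 4 / ρ ^ 2 := by
    rw [gradient_barrier, norm_smul, mul_pow, Real.norm_eq_abs, sq_abs]
    calc (-2 / ρ ^ 2) ^ 2 * ‖x - x₀‖ ^ 2 ≤ (-2 / ρ ^ 2) ^ 2 * ρ ^ 2 := by gcongr
      _ = 4 / ρ ^ 2 := by
          field_simp
          norm_num
  have hlap : -(2 * Module.finrank ℝ E / ρ ^ 2)
      ≤ barrier κ ρ x₀ σ x * Δ (barrier κ ρ x₀ σ) x := by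
    rw [laplacian_barrier, mul_neg, neg_le_neg_iff]
    exact mul_le_of_le_one_left (by positivity) (barrier_le_one (by linarith) hσ.le hσ1)
  have hdiffusion : (m + 1) * (4 / ρ ^ 2) + 2 * Module.finrank ℝ E / ρ ^ 2 ≤ 1 / (16 * τ) := by
    rw [mul_div_assoc', ← add_div, div_le_div_iff₀ (by positivity) (by positivity)]
    linarith
  have hone : 1 / (16 * τ) ≤ σ ^ (-κ) / (16 * τ) := by
    gcongr
    exact Real.one_le_rpow_of_pos_of_le_one_of_nonpos hσ hσ1 (by linarith)
  have hhalf : σ ^ (-κ) / (8 * τ) = σ ^ (-κ) / (16 * τ) + σ ^ (-κ) / (16 * τ) := by ring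
  linarith [mul_le_mul_of_nonneg_left hgrad (by linarith : 0 ≤ m + 1)]

theorem exists_hasDerivAt_barrier_supersolution {T t W F p : ℝ} (hκ : 0 < κ) (hκ4 : κ ≤ 1 / 4)
    (hρ : 0 < ρ) (hτ : 0 < τ) (hm : 0 < m) (hmp : m * (p - 1) = 2 + 2 * κ) (hL : 0 < L)
    (ht : t ∈ Ico (T - τ) T) (hsmall : 16 * (4 * (m + 1) + 2 * Module.finrank ℝ E) * τ ≤ ρ ^ 2)
    (hW0 : 0 ≤ W) (hW : W * (32 * τ * L ^ (p - 1)) < m) (hx : ‖x - x₀‖ ≤ ρ)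
    (hy : √((T - t) / τ) ≤ barrier κ ρ x₀ ((T - t) / τ) x)
    (hF : F ≤ 2 * (L * barrier κ ρ x₀ ((T - t) / τ) x ^ (-m)) ^ p) :
    ∃ w', HasDerivAt (fun s ↦ L * barrier κ ρ x₀ ((T - s) / τ) x ^ (-m)) w' t ∧
      W * F < w' - Δ (fun z ↦ L * barrier κ ρ x₀ ((T - t) / τ) z ^ (-m)) x := by
  have hσ : 0 < (T - t) / τ := div_pos (sub_pos.2 ht.2) hτ
  have hσ1 : (T - t) / τ ≤ 1 := (div_le_one hτ).2 (by linarith [ht.1])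
  have hy0 := (Real.sqrt_pos.2 hσ).trans_le hy
  have hscale : HasDerivAt (fun s ↦ (T - s) / τ) (-1 / τ) t :=
    ((hasDerivAt_id t).const_sub T).div_const τ
  have hderiv := ((((hasDerivAt_barrier (κ := κ) (ρ := ρ) (x₀ := x₀) (x := x) hσ).comp t
    hscale).rpow_const (p := -m) (Or.inl hy0.ne')).const_mul L)
  refine ⟨_, hderiv, ?_⟩
  have hbarrier := rpow_neg_div_le_barrier hκ hκ4 hρ hτ hm.le hσ hσ1 hsmall hx hy
  have hreaction := hF.trans (mul_le_mul_of_nonneg_left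
    (const_mul_rpow_neg_rpow_le hL.le hκ.le hmp hσ hy) zero_le_two)
  rw [laplacian_const_mul_rpow_neg contDiff_barrier.contDiffAt hy0]
  simp only [Function.comp_apply, rpow_sub_one_eq_rpow_sub_two_mul hy0]
  set y := barrier κ ρ x₀ ((T - t) / τ) x
  set σ := (T - t) / τ
  have hpow : L ^ p = L ^ (p - 1) * L := by rw [← Real.rpow_add_one hL.ne', sub_add_cancel]
  have : 0 < L * (y ^ (-m - 2) * σ ^ (-κ)) := by positivity
  calc W * F ≤ W * (2 * (L ^ p * (y ^ (-m - 2) * σ ^ (-κ)))) := by gcongr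
    _ = W * (32 * τ * L ^ (p - 1)) * (L * (y ^ (-m - 2) * σ ^ (-κ))) / (16 * τ) := by
        rw [hpow]
        field_simp
        ring
    _ < m * (L * (y ^ (-m - 2) * σ ^ (-κ))) / (16 * τ) := by gcongr
    _ = L * m * y ^ (-m - 2) * (σ ^ (-κ) / (16 * τ)) := by ring
    _ ≤ _ := (mul_le_mul_of_nonneg_left hbarrier (by positivity)).trans_eq (by ring)

end Barrier

section Comparison

variable {E : Type*} [NormedAddCommGroup E] [InnerProductSpace ℝ E] [FiniteDimensional ℝ E]
  {Ω A : Set E} {V : E → ℝ} {u : ℝ → E → ℝ} {f : ℝ → ℝ} {T : ℝ}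

theorem IsMonotoneSolution.le_of_supersolution {w : ℝ → E → ℝ} {a b : ℝ}
    (h : IsMonotoneSolution Ω T f V u) (hΩ : IsOpen Ω) (hf : ConvexOn ℝ (Ici 0) f)
    (hd : ∀ s > 0, DifferentiableAt ℝ f s) (hV : ContinuousOn V Ω) (hV0 : ∀ x ∈ Ω, 0 ≤ V x)
    (hA : IsCompact A) (hAΩ : A ⊆ Ω) (ha : 0 < a) (hb : b < T)
    (hw : ContinuousOn (Function.uncurry w) (Icc a b ×ˢ A)) (hinit : ∀ x ∈ A, u a x ≤ w a x)
    (hbdry : ∀ t ∈ Icc a b, ∀ x ∈ frontier A, u t x ≤ w t x)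
    (hint : ∀ t ∈ Ioc a b, ∀ x ∈ interior A, w t x < u t x → 0 ≤ w t x ∧ ContDiffAt ℝ 2 (w t) x ∧
      ∃ w', HasDerivAt (fun s ↦ w s x) w' t ∧ V x * f (w t x) < w' - Δ (w t) x) :
    ∀ t ∈ Icc a b, ∀ x ∈ A, u t x ≤ w t x := by
  have hsub : Icc a b ⊆ Ioo 0 T := Icc_subset_Ioo ha hb
  have hu := (h.continuousOn_uncurry hΩ).mono (prod_mono hsub hAΩ)
  obtain ⟨m, hm⟩ := (isCompact_Icc.prod hA).bddAbove_image hu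
  obtain ⟨L, hL⟩ := exists_forall_mul_deriv_lt hA (hV.mono hAΩ) (fun x hx ↦ hV0 x (hAΩ hx)) hf hd m
  have hnonneg := nonneg_of_parabolic_supersolution_cylinder (L := L)
    (J := fun t x ↦ w t x - u t x) hA (hw.sub hu) (fun x hx ↦ sub_nonneg.2 (hinit x hx))
    (fun t ht x hx ↦ sub_nonneg.2 (hbdry t ht x hx)) fun t ht x hx hlt ↦ by
      have hwu : w t x < u t x := sub_neg.1 hlt
      have hxA := interior_subset hx
      have htab := Ioc_subset_Icc_self ht
      have hcu := h.contDiffAt t (hsub htab) x (hAΩ hxA)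
      obtain ⟨hw0, hcw, w', hw', hsuper⟩ := hint t ht x hx hwu
      have hu0 := hw0.trans_lt hwu
      have hconv := mul_le_mul_of_nonneg_left
        (deriv_mul_sub_le_of_convexOn_Ici hf hw0 hu0 (hd _ hu0)) (hV0 x (hAΩ hxA))
      have hlip := mul_lt_mul_of_neg_right
        (hL x hxA _ hu0 (hm (mem_image_of_mem (Function.uncurry u) (mk_mem_prod htab hxA)))) hlt
      have hΔ : Δ (fun y ↦ w t y - u t y) x = Δ (w t) x - Δ (u t) x := hcw.laplacian_sub hcu
      refine ⟨hcw.sub hcu, _, hw'.fun_sub (h.hasDerivAt (hsub htab) (hAΩ hxA)), ?_⟩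
      rw [hΔ]
      linarith
  exact fun t ht x hx ↦ sub_nonneg.1 (hnonneg t ht x hx)

end Comparison

section BarrierSupersolution

variable {E : Type*} [NormedAddCommGroup E] {κ ρ τ m L T : ℝ} {x₀ : E}

/-- The function compared with the solution near `x₀`. The second argument of the maximum makes it
agree with the type I blowup rate `L * √σ ^ (-m)` initially and on the lateral boundary. -/
noncomputable def barrierSupersolution (κ ρ τ m L T : ℝ) (x₀ : E) (t : ℝ) (x : E) : ℝ :=
  L * max (barrier κ ρ x₀ ((T - t) / τ) x) √((T - t) / τ) ^ (-m)

theorem continuousOn_barrierSupersolution (hκ : κ ≤ 1 / 2) (hτ : 0 < τ) :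
    ContinuousOn (Function.uncurry (barrierSupersolution κ ρ τ m L T x₀)) (Iio T ×ˢ univ) := by
  have hbarrier : Continuous fun z : ℝ × E ↦ barrier κ ρ x₀ ((T - z.1) / τ) z.2 :=
    (continuous_barrier hκ).comp (f := fun z : ℝ × E ↦ ((T - z.1) / τ, z.2)) (by fun_prop)
  refine continuousOn_const.mul (ContinuousOn.rpow_const ?_ fun z hz ↦ Or.inl ?_)
  · exact (hbarrier.max (by fun_prop)).continuousOn
  · exact (lt_max_of_lt_right (Real.sqrt_pos.2 (div_pos (sub_pos.2 hz.1) hτ))).ne'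

theorem barrierSupersolution_eventuallyEq {t : ℝ} {x : E} (hκ : κ ≤ 1 / 2)
    (hlt : √((T - t) / τ) < barrier κ ρ x₀ ((T - t) / τ) x) :
    ∀ᶠ z : ℝ × E in 𝓝 (t, x), barrierSupersolution κ ρ τ m L T x₀ z.1 z.2
      = L * barrier κ ρ x₀ ((T - z.1) / τ) z.2 ^ (-m) := by
  have hbarrier : Continuous fun z : ℝ × E ↦ barrier κ ρ x₀ ((T - z.1) / τ) z.2 :=
    (continuous_barrier hκ).comp (f := fun z : ℝ × E ↦ ((T - z.1) / τ, z.2)) (by fun_prop)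
  have hsqrt : Continuous fun z : ℝ × E ↦ √((T - z.1) / τ) := by fun_prop
  filter_upwards [hsqrt.continuousAt.eventually_lt (hbarrier.continuousAt (x := (t, x))) hlt]
    with z hz
  rw [barrierSupersolution, max_eq_left hz.le]

theorem barrierSupersolution_le {t : ℝ} {x : E} (hρ : 0 < ρ) (hτ : 0 < τ) (ht : t ≤ T) (hm : 0 ≤ m)
    (hL : 0 ≤ L) (hx : ‖x - x₀‖ ≤ ρ / 2) :
    barrierSupersolution κ ρ τ m L T x₀ t x ≤ L * (1 / 4) ^ (-m) :=
  mul_le_mul_of_nonneg_left (Real.rpow_le_rpow_of_nonpos (by norm_num)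
    (le_max_of_le_left (one_quarter_le_barrier hρ (div_nonneg (sub_nonneg.2 ht) hτ.le) hx))
    (neg_nonpos.2 hm)) hL

variable [InnerProductSpace ℝ E] [FiniteDimensional ℝ E] {Ω : Set E} {V : E → ℝ} {u : ℝ → E → ℝ}
  {f : ℝ → ℝ} {p : ℝ}

theorem exists_hasDerivAt_barrierSupersolution {t W : ℝ} {x : E} (hκ : 0 < κ) (hκ4 : κ ≤ 1 / 4)
    (hρ : 0 < ρ) (hτ : 0 < τ) (hm : 0 < m) (hmp : m * (p - 1) = 2 + 2 * κ) (hL : 0 < L)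
    (hfL : ∀ s ≥ L, f s ≤ 2 * s ^ p) (ht : t ∈ Ico (T - τ) T)
    (hsmall : 16 * (4 * (m + 1) + 2 * Module.finrank ℝ E) * τ ≤ ρ ^ 2)
    (hW0 : 0 ≤ W) (hW : W * (32 * τ * L ^ (p - 1)) < m) (hx : ‖x - x₀‖ ≤ ρ)
    (hlt : √((T - t) / τ) < barrier κ ρ x₀ ((T - t) / τ) x) :
    ContDiffAt ℝ 2 (barrierSupersolution κ ρ τ m L T x₀ t) x ∧
      ∃ w', HasDerivAt (fun s ↦ barrierSupersolution κ ρ τ m L T x₀ s x) w' t ∧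
        W * f (barrierSupersolution κ ρ τ m L T x₀ t x)
          < w' - Δ (barrierSupersolution κ ρ τ m L T x₀ t) x := by
  have hσ : 0 < (T - t) / τ := div_pos (sub_pos.2 ht.2) hτ
  have hσ1 : (T - t) / τ ≤ 1 := (div_le_one hτ).2 (by linarith [ht.1])
  have hy : 0 < barrier κ ρ x₀ ((T - t) / τ) x := (Real.sqrt_nonneg _).trans_lt hlt
  have hev := barrierSupersolution_eventuallyEq (m := m) (L := L) (by linarith) hlt
  have hspace : barrierSupersolution κ ρ τ m L T x₀ t
      =ᶠ[𝓝 x] fun z ↦ L * barrier κ ρ x₀ ((T - t) / τ) z ^ (-m) :=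
    (Continuous.prodMk_right t).continuousAt.eventually hev
  have htime : (fun s ↦ barrierSupersolution κ ρ τ m L T x₀ s x)
      =ᶠ[𝓝 t] fun s ↦ L * barrier κ ρ x₀ ((T - s) / τ) x ^ (-m) :=
    (Continuous.prodMk_left x).continuousAt.eventually hev
  have hLy : L ≤ L * barrier κ ρ x₀ ((T - t) / τ) x ^ (-m) :=
    le_mul_of_one_le_right hL.le (Real.one_le_rpow_of_pos_of_le_one_of_nonpos hy
      (barrier_le_one (by linarith) hσ.le hσ1) (by linarith))
  obtain ⟨w', hw', hsuper⟩ := exists_hasDerivAt_barrier_supersolution hκ hκ4 hρ hτ hm hmp hL ht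
    hsmall hW0 hW hx hlt.le (hfL _ hLy)
  refine ⟨((contDiffAt_const.mul (contDiff_barrier.contDiffAt.rpow_const_of_ne hy.ne'))
    |>.congr_of_eventuallyEq hspace), w', hw'.congr_of_eventuallyEq htime, ?_⟩
  rwa [(InnerProductSpace.laplacian_congr_nhds hspace).eq_of_nhds, hspace.eq_of_nhds]

theorem IsMonotoneSolution.le_barrierSupersolution (h : IsMonotoneSolution Ω T f V u)
    (hΩ : IsOpen Ω) (hf : ConvexOn ℝ (Ici 0) f) (hd : ∀ s > 0, DifferentiableAt ℝ f s)
    (hV : ContinuousOn V Ω) (hV0 : ∀ x ∈ Ω, 0 ≤ V x)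
    (hκ : 0 < κ) (hκ4 : κ ≤ 1 / 4) (hρ : 0 < ρ) (hτ : 0 < τ) (hτT : τ < T) (hm : 0 < m)
    (hmp : m * (p - 1) = 2 + 2 * κ) (hL : 0 < L) (hfL : ∀ s ≥ L, f s ≤ 2 * s ^ p)
    (hsmall : 16 * (4 * (m + 1) + 2 * Module.finrank ℝ E) * τ ≤ ρ ^ 2)
    (hρΩ : closedBall x₀ ρ ⊆ Ω)
    (hVm : ∀ x ∈ closedBall x₀ ρ, V x * (32 * τ * L ^ (p - 1)) < m)
    (hu : ∀ t ∈ Ico (T - τ) T, ∀ x ∈ closedBall x₀ ρ, u t x ≤ L * √((T - t) / τ) ^ (-m)) :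
    ∀ t ∈ Ico (T - τ) T, ∀ x ∈ closedBall x₀ ρ,
      u t x ≤ barrierSupersolution κ ρ τ m L T x₀ t x := by
  have hσ1 : ∀ t ∈ Ico (T - τ) T, (T - t) / τ ≤ 1 := fun t ht ↦
    (div_le_one hτ).2 (by linarith [ht.1])
  have hσ : ∀ t ∈ Ico (T - τ) T, 0 < (T - t) / τ := fun t ht ↦ div_pos (sub_pos.2 ht.2) hτ
  have hle : ∀ t ∈ Ico (T - τ) T, ∀ x ∈ closedBall x₀ ρ,
      barrier κ ρ x₀ ((T - t) / τ) x ≤ √((T - t) / τ) →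
        u t x ≤ barrierSupersolution κ ρ τ m L T x₀ t x := fun t ht x hx hle ↦ by
    rw [barrierSupersolution, max_eq_right hle]
    exact hu t ht x hx
  intro t ht
  have hsub : Icc (T - τ) t ⊆ Ico (T - τ) T := Icc_subset_Ico_right ht.2
  refine h.le_of_supersolution hΩ hf hd hV hV0 (isCompact_closedBall x₀ ρ) hρΩ (sub_pos.2 hτT) ht.2
    ((continuousOn_barrierSupersolution (by linarith) hτ).mono
      (prod_mono (fun s hs ↦ (hsub hs).2) (subset_univ _))) ?_ ?_ ?_ t (right_mem_Icc.2 ht.1)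
  · intro x hx
    refine hle _ ⟨le_rfl, by linarith⟩ x hx ?_
    rw [sub_sub_cancel, div_self hτ.ne', Real.sqrt_one]
    exact barrier_le_one (by linarith) zero_le_one le_rfl
  · intro s hs x hx
    have hxρ : ‖x - x₀‖ = ρ := mem_sphere_iff_norm.1 (frontier_closedBall_subset_sphere hx)
    exact hle s (hsub hs) x (mem_closedBall_iff_norm.2 hxρ.le)
      ((barrier_nonpos_of_norm_eq (by linarith) hρ (hσ s (hsub hs)).le (hσ1 s (hsub hs)) hxρ).trans
        (Real.sqrt_nonneg _))
  · intro s hs x hx hlt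
    have hs' := hsub (Ioc_subset_Icc_self hs)
    have hx' := interior_subset hx
    refine ⟨mul_nonneg hL.le (Real.rpow_nonneg (le_max_of_le_right (Real.sqrt_nonneg _)) _),
      exists_hasDerivAt_barrierSupersolution hκ hκ4 hρ hτ hm hmp hL hfL hs' hsmall
        (hV0 x (hρΩ hx')) (hVm x hx') (mem_closedBall_iff_norm.1 hx') ?_⟩
    exact lt_of_not_ge fun hge ↦ hlt.not_ge (hle s hs' x hx' hge)

theorem IsMonotoneSolution.le_mul_one_quarter_rpow_neg (h : IsMonotoneSolution Ω T f V u)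
    (hΩ : IsOpen Ω) (hf : ConvexOn ℝ (Ici 0) f) (hd : ∀ s > 0, DifferentiableAt ℝ f s)
    (hV : ContinuousOn V Ω) (hV0 : ∀ x ∈ Ω, 0 ≤ V x)
    (hκ : 0 < κ) (hκ4 : κ ≤ 1 / 4) (hρ : 0 < ρ) (hτ : 0 < τ) (hτT : τ < T) (hm : 0 < m)
    (hmp : m * (p - 1) = 2 + 2 * κ) (hL : 0 < L) (hfL : ∀ s ≥ L, f s ≤ 2 * s ^ p)
    (hsmall : 16 * (4 * (m + 1) + 2 * Module.finrank ℝ E) * τ ≤ ρ ^ 2)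
    (hρΩ : closedBall x₀ ρ ⊆ Ω)
    (hVm : ∀ x ∈ closedBall x₀ ρ, V x * (32 * τ * L ^ (p - 1)) < m)
    (hu : ∀ t ∈ Ico (T - τ) T, ∀ x ∈ closedBall x₀ ρ, u t x ≤ L * √((T - t) / τ) ^ (-m))
    {t : ℝ} {x : E} (ht : t ∈ Ioo 0 T) (hx : x ∈ closedBall x₀ (ρ / 2)) :
    u t x ≤ L * (1 / 4) ^ (-m) := by
  have hx' : x ∈ closedBall x₀ ρ := closedBall_subset_closedBall (by linarith) hx
  have ht' : max t (T - τ) ∈ Ico (T - τ) T := ⟨le_max_right _ _, max_lt ht.2 (by linarith)⟩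
  calc u t x ≤ u (max t (T - τ)) x :=
        h.monotoneOn (hρΩ hx') ht ⟨lt_max_of_lt_left ht.1, ht'.2⟩ (le_max_left _ _)
    _ ≤ barrierSupersolution κ ρ τ m L T x₀ (max t (T - τ)) x :=
        h.le_barrierSupersolution hΩ hf hd hV hV0 hκ hκ4 hρ hτ hτT hm hmp hL hfL hsmall hρΩ hVm hu
          _ ht' x hx'
    _ ≤ L * (1 / 4) ^ (-m) :=
        barrierSupersolution_le hρ hτ ht'.2.le hm.le hL.le (mem_closedBall_iff_norm.1 hx)

end BarrierSupersolution

section NoBlowup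

theorem eventually_exists_mul_le_sq_and_mul_rpow_sub_one_lt {κ β d m p K : ℝ} (hκ : 0 < κ)
    (hκβ : 2 * κ < β) (hd : 0 < d) (hm : 0 < m) (hmp : m * (p - 1) = 2 + 2 * κ) (hK : 0 ≤ K)
    (A C : ℝ) :
    ∀ᶠ τ in 𝓝[>] (0 : ℝ), ∃ ρ ∈ Ioc 0 d, A * τ ≤ ρ ^ 2 ∧
      C * ρ ^ β * (32 * τ * (K * τ ^ (-(m / 2))) ^ (p - 1)) < m := by
  filter_upwards [self_mem_nhdsWithin, eventually_exists_mul_le_sq_and_mul_rpow_lt hκ hκβ hd A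
    (32 * C * K ^ (p - 1) / m)] with τ hτ ⟨ρ, hρ, hA, hC⟩
  have hτ : 0 < τ := hτ
  have hscale : τ * (K * τ ^ (-(m / 2))) ^ (p - 1) = K ^ (p - 1) * τ ^ (-κ) := by
    rw [Real.mul_rpow hK (by positivity), ← Real.rpow_mul hτ.le, mul_left_comm,
      ← Real.rpow_one_add' hτ.le (by linarith)]
    congr 2
    linear_combination -hmp / 2
  refine ⟨ρ, hρ, hA, ?_⟩
  calc C * ρ ^ β * (32 * τ * (K * τ ^ (-(m / 2))) ^ (p - 1))
      = m * (32 * C * K ^ (p - 1) / m * ρ ^ β) * τ ^ (-κ) := by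
        rw [mul_assoc 32, hscale]
        field_simp
    _ < m * τ ^ κ * τ ^ (-κ) := by gcongr
    _ = m := by rw [mul_assoc, ← Real.rpow_add hτ, add_neg_cancel, Real.rpow_zero, mul_one]

theorem mul_rpow_mul_sqrt_div_rpow_neg {s τ : ℝ} (hs : 0 ≤ s) (hτ : 0 < τ) (K m : ℝ) :
    K * τ ^ (-(m / 2)) * √(s / τ) ^ (-m) = K * s ^ (-(m / 2)) := by
  have hsqrt : √(s / τ) ^ (-m) = (s / τ) ^ (-(m / 2)) := by
    rw [Real.sqrt_eq_rpow, ← Real.rpow_mul (by positivity)]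
    ring_nf
  rw [hsqrt, mul_assoc, ← Real.mul_rpow hτ.le (by positivity), mul_div_cancel₀ _ hτ.ne']

variable {E : Type*} [NormedAddCommGroup E] [InnerProductSpace ℝ E] [FiniteDimensional ℝ E]
  {Ω A K : Set E} {V : E → ℝ} {u : ℝ → E → ℝ} {f : ℝ → ℝ} {T p β : ℝ} {x₀ : E}

namespace IsMonotoneSolution

theorem exists_eventually_forall_le_of_le_mul_rpow_neg {κ m K : ℝ}
    (h : IsMonotoneSolution Ω T f V u) (hΩ : IsOpen Ω) (hT : 0 < T)
    (hf : ConvexOn ℝ (Ici 0) f) (hd : ∀ s > 0, DifferentiableAt ℝ f s)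
    (hlim : Tendsto (fun s : ℝ ↦ s ^ (-p) * f s) atTop (𝓝 1)) (hV : ContinuousOn V Ω)
    (hV0 : ∀ x ∈ Ω, 0 ≤ V x) (hVx₀ : V =O[𝓝 x₀] fun x ↦ ‖x - x₀‖ ^ β) (hx₀ : x₀ ∈ Ω)
    (hA : A ∈ 𝓝 x₀) (hκ : 0 < κ) (hκ4 : κ ≤ 1 / 4) (hκβ : 2 * κ < β) (hm : 0 < m)
    (hmp : m * (p - 1) = 2 + 2 * κ)
    (hu : ∀ᶠ t in 𝓝[<] T, ∀ x ∈ A, u t x ≤ K * (T - t) ^ (-(m / 2))) :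
    ∃ M, ∀ᶠ x in 𝓝 x₀, ∀ t ∈ Ioo 0 T, u t x ≤ M := by
  obtain ⟨S, hS⟩ := eventually_atTop.1 (eventually_le_two_mul_rpow hlim)
  obtain ⟨C, hC, hVC⟩ := hVx₀.exists_pos
  obtain ⟨d, hd0, hball⟩ := nhds_basis_closedBall.eventually_iff.1
    (hVC.bound.and ((hΩ.eventually_mem hx₀).and hA))
  obtain ⟨t₀, ht₀, hut⟩ := (nhdsLT_basis_of_exists_lt ⟨0, hT⟩).eventually_iff.1 hu
  set K' := max 1 (max S K)
  have hK' : 0 < K' := one_pos.trans_le (le_max_left _ _)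
  obtain ⟨τ, ⟨⟨ρ, ⟨hρ, hρd⟩, hsmall, hCm⟩, hτT⟩, hτ, hτ1⟩ :=
    ((eventually_exists_mul_le_sq_and_mul_rpow_sub_one_lt hκ hκβ hd0 hm hmp hK'.le
      (16 * (4 * (m + 1) + 2 * Module.finrank ℝ E)) C).and
      (Ioo_mem_nhdsGT (lt_min hT (sub_pos.2 ht₀))) |>.and (Ioo_mem_nhdsGT one_pos)).exists
  obtain ⟨hτT, hτt₀⟩ := lt_min_iff.1 hτT.2
  have hρball : ∀ x ∈ closedBall x₀ ρ, ‖V x‖ ≤ C * ‖‖x - x₀‖ ^ β‖ ∧ x ∈ Ω ∧ x ∈ A := fun x hx ↦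
    hball (closedBall_subset_closedBall hρd hx)
  set L := K' * τ ^ (-(m / 2))
  have hL : ∀ s ≥ L, f s ≤ 2 * s ^ p := fun s hs ↦ hS s <| calc
    S ≤ K' := (le_max_left _ _).trans (le_max_right _ _)
    _ ≤ L := le_mul_of_one_le_right hK'.le
      (Real.one_le_rpow_of_pos_of_le_one_of_nonpos hτ hτ1.le (by linarith))
    _ ≤ s := hs
  have hrate : ∀ t ∈ Ico (T - τ) T, ∀ x ∈ closedBall x₀ ρ, u t x ≤ L * √((T - t) / τ) ^ (-m) := by
    intro t ht x hx
    rw [mul_rpow_mul_sqrt_div_rpow_neg (sub_pos.2 ht.2).le hτ]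
    exact (hut ⟨by linarith [ht.1], ht.2⟩ x (hρball x hx).2.2).trans (mul_le_mul_of_nonneg_right
      ((le_max_right _ _).trans (le_max_right _ _)) (Real.rpow_nonneg (sub_pos.2 ht.2).le _))
  have hVm : ∀ x ∈ closedBall x₀ ρ, V x * (32 * τ * L ^ (p - 1)) < m := fun x hx ↦ by
    have hVx : V x ≤ C * ρ ^ β := (le_abs_self _).trans <| (hρball x hx).1.trans <| by
      rw [Real.norm_of_nonneg (by positivity)]
      exact mul_le_mul_of_nonneg_left
        (Real.rpow_le_rpow (norm_nonneg _) (mem_closedBall_iff_norm.1 hx) (by linarith)) hC.le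
    exact (mul_le_mul_of_nonneg_right hVx (by positivity)).trans_lt hCm
  refine ⟨L * (1 / 4) ^ (-m), mem_of_superset (closedBall_mem_nhds x₀ (half_pos hρ)) ?_⟩
  exact fun x hx t ht ↦ h.le_mul_one_quarter_rpow_neg hΩ hf hd hV hV0 hκ hκ4 hρ hτ hτT hm hmp
    (by positivity) hL hsmall (fun x hx ↦ (hρball x hx).2.1) hVm hrate ht hx

theorem exists_eventually_forall_le_of_deriv_eq_zero (h : IsMonotoneSolution Ω T f V u)
    (hΩ : IsOpen Ω) (hT : 0 < T) (hx₀ : x₀ ∈ Ω)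
    (hzero : ∀ t ∈ Ioo 0 T, ∀ x ∈ Ω, deriv (fun s ↦ u s x) t = 0) :
    ∃ M, ∀ᶠ x in 𝓝 x₀, ∀ t ∈ Ioo 0 T, u t x ≤ M := by
  have hmid : T / 2 ∈ Ioo 0 T := ⟨half_pos hT, half_lt_self hT⟩
  obtain ⟨M, hM⟩ := exists_gt (u (T / 2) x₀)
  refine ⟨M, ?_⟩
  filter_upwards [(h.contDiffAt _ hmid x₀ hx₀).continuousAt.eventually (gt_mem_nhds hM),
    hΩ.mem_nhds hx₀] with x hxM hx t ht
  have hconst : u t x = u (T / 2) x :=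
    isOpen_Ioo.is_const_of_deriv_eq_zero isPreconnected_Ioo
      (fun s hs ↦ (h.differentiableAt s hs x hx).differentiableWithinAt)
      (fun s hs ↦ hzero s hs x hx) ht hmid
  exact hconst.trans_le hxM.le

theorem exists_eventually_forall_le (h : IsMonotoneSolution Ω T f V u) (hΩ : IsOpen Ω)
    (hconn : IsPreconnected Ω) (hT : 0 < T) (hp : 1 < p) (hf : ConvexOn ℝ (Ici 0) f)
    (hf1 : ContDiffOn ℝ 1 f (Ici 0))
    (hlim : Tendsto (fun s : ℝ ↦ s ^ (-p) * f s) atTop (𝓝 1)) (hV : ContinuousOn V Ω)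
    (hV0 : ∀ x ∈ Ω, 0 ≤ V x) (hβ : 0 < β) (hVx₀ : V =O[𝓝 x₀] fun x ↦ ‖x - x₀‖ ^ β)
    (hK : IsCompact K) (hKΩ : K ⊆ Ω) (hKx₀ : K ∈ 𝓝 x₀) (hVK : ∀ x ∈ frontier K, 0 < V x) :
    ∃ M, ∀ᶠ x in 𝓝 x₀, ∀ t ∈ Ioo 0 T, u t x ≤ M := by
  have hx₀ : x₀ ∈ Ω := hKΩ (mem_of_mem_nhds hKx₀)
  by_cases! hzero : ∀ t ∈ Ioo 0 T, ∀ x ∈ Ω, deriv (fun s ↦ u s x) t = 0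
  · exact h.exists_eventually_forall_le_of_deriv_eq_zero hΩ hT hx₀ hzero
  obtain ⟨t₁, ht₁, x₁, hx₁, hne⟩ := hzero
  have hpos : 0 < deriv (fun s ↦ u s x₁) t₁ := (h.deriv_nonneg t₁ ht₁ x₁ hx₁).lt_of_ne' hne
  have hdiff : DifferentiableOn ℝ f (Ici 0) := hf1.differentiableOn one_ne_zero
  have hd : ∀ s > 0, DifferentiableAt ℝ f s := fun s hs ↦
    (hdiff s (mem_Ici.2 hs.le)).differentiableAt (Ici_mem_nhds hs)
  set κ := min (β / 4) (1 / 4)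
  have hκ : 0 < κ := by positivity
  have hκβ : κ ≤ β / 4 := min_le_left _ _
  have hp1 : 0 < p - 1 := sub_pos.2 hp
  set m := 2 * (1 + κ) / (p - 1)
  have hm : 0 < m := by positivity
  have hmp : m * (p - 1) = 2 + 2 * κ := by rw [div_mul_cancel₀ _ hp1.ne']; ring
  have hmp' : 2 / m < p - 1 := (div_lt_iff₀ hm).2 (by linarith)
  have hq : 1 < 1 + 2 / m := lt_add_of_pos_right 1 (by positivity)
  obtain ⟨δ, hδ, hderiv⟩ := h.exists_mul_rpow_le_deriv hΩ hT hf hd hlim hV hV0 hq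
    (by linarith : 1 + 2 / m < p) (fun A hAΩ hA ↦ h.uniformlyIncreasingOn_of_isCompact hΩ hconn hf
      hf1.continuousOn (hdiff 0 self_mem_Ici) hV hV0 ht₁ hx₁ hpos hA hAΩ) hK hKΩ hVK
  obtain ⟨C, hC⟩ := h.exists_le_mul_rpow_neg hT hKΩ hq hδ hderiv
  rw [add_sub_cancel_left, inv_div] at hC
  exact h.exists_eventually_forall_le_of_le_mul_rpow_neg hΩ hT hf hd hlim hV hV0 hVx₀ hx₀ hKx₀ hκ
    (min_le_right _ _) (by linarith) hm hmp hC

end IsMonotoneSolution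

end NoBlowup

section Component

theorem exists_isCompact_mem_nhds_disjoint_frontier {X : Type*} [TopologicalSpace X] [T2Space X]
    [LocallyCompactSpace X] {Z Ω : Set X} {x₀ : X} (hZ : IsCompact Z) (hΩ : IsOpen Ω)
    (hx₀ : x₀ ∈ Z) (hcomp : connectedComponentIn Z x₀ ⊆ Ω) :
    ∃ K ⊆ Ω, IsCompact K ∧ K ∈ 𝓝 x₀ ∧ Disjoint (frontier K) Z := by
  have := isCompact_iff_compactSpace.1 hZ
  rw [connectedComponentIn_eq_image hx₀, connectedComponent_eq_iInter_isClopen,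
    image_subset_iff] at hcomp
  have : Nonempty { s : Set Z // IsClopen s ∧ (⟨x₀, hx₀⟩ : Z) ∈ s } :=
    ⟨univ, isClopen_univ, mem_univ _⟩
  obtain ⟨⟨W, hW, hxW⟩, hWΩ⟩ := exists_subset_nhds_of_compactSpace
    (V := fun s : { s : Set Z // IsClopen s ∧ (⟨x₀, hx₀⟩ : Z) ∈ s } ↦ s.1)
    (fun s t ↦ ⟨⟨s ∩ t, s.2.1.inter t.2.1, s.2.2, t.2.2⟩, inter_subset_left, inter_subset_right⟩)
    (fun s ↦ s.2.1.isClosed) fun x hx ↦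
      (hΩ.preimage continuous_subtype_val).mem_nhds (hcomp hx)
  have hcompact : ∀ s : Set Z, IsClosed s → IsCompact (Subtype.val '' s) := fun s hs ↦
    hs.isCompact.image continuous_subtype_val
  obtain ⟨K, hK, hWK, hKsub⟩ := exists_compact_between (hcompact W hW.isClosed)
    (hΩ.inter (hcompact Wᶜ hW.compl.isClosed).isClosed.isOpen_compl)
    (by
      rintro _ ⟨x, hx, rfl⟩
      exact ⟨hWΩ hx, fun ⟨y, hy, hyx⟩ ↦ hy (Subtype.val_injective hyx ▸ hx)⟩)
  refine ⟨K, fun x hx ↦ (hKsub hx).1, hK,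
    mem_interior_iff_mem_nhds.1 (hWK (mem_image_of_mem _ hxW)), disjoint_left.2 fun x hx hxZ ↦ ?_⟩
  by_cases hxmem : (⟨x, hxZ⟩ : Z) ∈ W
  · exact hx.2 (hWK (mem_image_of_mem _ hxmem))
  · exact (hKsub (hK.isClosed.frontier_subset hx)).2 ⟨⟨x, hxZ⟩, hxmem, rfl⟩

end Component

section Main

theorem continuousOn_of_abs_sub_le_mul_rpow {E : Type*} [SeminormedAddCommGroup E] {V : E → ℝ}
    {s : Set E} {C β : ℝ} (hβ : 0 < β)
    (hV : ∀ x ∈ s, ∀ y ∈ s, |V x - V y| ≤ C * ‖x - y‖ ^ β) : ContinuousOn V s := by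
  refine fun x hx ↦ tendsto_iff_norm_sub_tendsto_zero.2 ?_
  have hbound : Continuous fun y ↦ C * ‖y - x‖ ^ β :=
    continuous_const.mul ((continuous_sub_right x).norm.rpow_const fun _ ↦ Or.inr hβ.le)
  refine squeeze_zero' (.of_forall fun _ ↦ norm_nonneg _)
    (eventually_mem_nhdsWithin.mono fun y hy ↦ hV y hy x hx) ?_
  simpa [Real.zero_rpow hβ.ne'] using (hbound.tendsto x).mono_left nhdsWithin_le_nhds

theorem isBigO_rpow_norm_sub_of_abs_sub_le {E : Type*} [SeminormedAddCommGroup E] {V : E → ℝ}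
    {s : Set E} {x₀ : E} {C β : ℝ} (hs : s ∈ 𝓝 x₀) (hVx₀ : V x₀ = 0)
    (hV : ∀ x ∈ s, ∀ y ∈ s, |V x - V y| ≤ C * ‖x - y‖ ^ β) :
    V =O[𝓝 x₀] fun x ↦ ‖x - x₀‖ ^ β := by
  refine .of_bound C ?_
  filter_upwards [hs] with x hx
  rw [Real.norm_of_nonneg (Real.rpow_nonneg (norm_nonneg (x - x₀)) β)]
  simpa [hVx₀] using hV x hx x₀ (mem_of_mem_nhds hs)

theorem isMonotoneSolution_of_deriv_eq_lap {n : ℕ} {Ω : Set (EuclideanSpace ℝ (Fin n))}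
    {T : ℝ} {f : ℝ → ℝ} {V : EuclideanSpace ℝ (Fin n) → ℝ}
    {u : ℝ → EuclideanSpace ℝ (Fin n) → ℝ} (hu_nonneg : ∀ t ∈ Ioo 0 T, ∀ x ∈ Ω, 0 ≤ u t x)
    (hu_t : ∀ t ∈ Ioo 0 T, ∀ x ∈ Ω, DifferentiableAt ℝ (fun s ↦ u s x) t)
    (hu_x : ∀ t ∈ Ioo 0 T, ∀ x ∈ Ω, ContDiffAt ℝ 2 (u t) x)
    (heq : ∀ t ∈ Ioo 0 T, ∀ x ∈ Ω,
      deriv (fun s ↦ u s x) t = lap (u t) x + V x * f (u t x))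
    (hmono : ∀ t ∈ Ioo 0 T, ∀ x ∈ Ω, 0 ≤ deriv (fun s ↦ u s x) t) :
    IsMonotoneSolution Ω T f V u where
  nonneg := hu_nonneg
  differentiableAt := hu_t
  contDiffAt := hu_x
  deriv_eq t ht x hx := by rw [heq t ht x hx, lap_eq_laplacian (hu_x t ht x hx)]
  deriv_nonneg := hmono

theorem exists_isCompact_mem_nhds_frontier_pos {E : Type*} [NormedAddCommGroup E] [ProperSpace E]
    {Ω : Set E} {V : E → ℝ} {x₀ : E} (hΩ : IsOpen Ω) (hΩb : Bornology.IsBounded Ω)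
    (hV : ContinuousOn V (closure Ω)) (hV0 : ∀ x ∈ closure Ω, 0 ≤ V x) (hx₀ : x₀ ∈ Ω)
    (hVx₀ : V x₀ = 0)
    (hcomp : connectedComponentIn {x ∈ closure Ω | V x = 0} x₀ ∩ frontier Ω = ∅) :
    ∃ K ⊆ Ω, IsCompact K ∧ K ∈ 𝓝 x₀ ∧ ∀ x ∈ frontier K, 0 < V x := by
  have hZ : IsCompact {x ∈ closure Ω | V x = 0} := hΩb.isCompact_closure.of_isClosed_subset
    (hV.preimage_isClosed_of_isClosed isClosed_closure isClosed_singleton) inter_subset_left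
  have hcompΩ : connectedComponentIn {x ∈ closure Ω | V x = 0} x₀ ⊆ Ω := fun x hx ↦ by
    by_contra hxΩ
    have hxfr : x ∈ frontier Ω :=
      hΩ.frontier_eq.symm ▸ ⟨(connectedComponentIn_subset _ _ hx).1, hxΩ⟩
    exact hcomp.le ⟨hx, hxfr⟩
  obtain ⟨K, hKΩ, hK, hKx₀, hKZ⟩ := exists_isCompact_mem_nhds_disjoint_frontier hZ hΩ
    ⟨subset_closure hx₀, hVx₀⟩ hcompΩ
  refine ⟨K, hKΩ, hK, hKx₀, fun x hx ↦ ?_⟩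
  have hxΩ : x ∈ closure Ω := subset_closure (hKΩ (hK.isClosed.frontier_subset hx))
  exact (hV0 x hxΩ).lt_of_ne' fun hVx ↦ hKZ.notMem_of_mem_left hx ⟨hxΩ, hVx⟩

theorem stmt1_general {E : Type*} [NormedAddCommGroup E] [InnerProductSpace ℝ E]
    [FiniteDimensional ℝ E] {Ω : Set E} {f : ℝ → ℝ} {V : E → ℝ} {u : ℝ → E → ℝ} {T p C β : ℝ}
    {x₀ : E} (h : IsMonotoneSolution Ω T f V u) (hΩ : IsOpen Ω) (hconn : IsPreconnected Ω)
    (hΩb : Bornology.IsBounded Ω) (hT : 0 < T) (hp : 1 < p) (hf : ConvexOn ℝ (Ici 0) f)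
    (hf1 : ContDiffOn ℝ 1 f (Ici 0))
    (hlim : Tendsto (fun s : ℝ ↦ s ^ (-p) * f s) atTop (𝓝 1))
    (hV0 : ∀ x ∈ closure Ω, 0 ≤ V x) (hβ : 0 < β)
    (hV : ∀ x ∈ closure Ω, ∀ y ∈ closure Ω, |V x - V y| ≤ C * ‖x - y‖ ^ β) (hx₀ : x₀ ∈ Ω)
    (hVx₀ : V x₀ = 0)
    (hcomp : connectedComponentIn {x ∈ closure Ω | V x = 0} x₀ ∩ frontier Ω = ∅) :
    ∃ r > 0, ∃ M > 0, ∀ t ∈ Ioo (T / 2) T, ∀ x ∈ Ω, ‖x - x₀‖ < r → u t x ≤ M := by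
  have hVc : ContinuousOn V (closure Ω) := continuousOn_of_abs_sub_le_mul_rpow hβ hV
  have hVβ : V =O[𝓝 x₀] fun x ↦ ‖x - x₀‖ ^ β := isBigO_rpow_norm_sub_of_abs_sub_le
    (mem_of_superset (hΩ.mem_nhds hx₀) subset_closure) hVx₀ hV
  obtain ⟨K, hKΩ, hK, hKx₀, hVK⟩ :=
    exists_isCompact_mem_nhds_frontier_pos hΩ hΩb hVc hV0 hx₀ hVx₀ hcomp
  obtain ⟨M, hM⟩ := h.exists_eventually_forall_le hΩ hconn hT hp hf hf1 hlim
    (hVc.mono subset_closure) (fun x hx ↦ hV0 x (subset_closure hx)) hβ hVβ hK hKΩ hKx₀ hVK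
  obtain ⟨r, hr, hrM⟩ := eventually_nhds_iff_ball.1 hM
  exact ⟨r, hr, max M 1, lt_max_of_lt_right one_pos, fun t ht x _ hx ↦
    (hrM x (mem_ball_iff_norm.2 hx) t ⟨(half_pos hT).trans ht.1, ht.2⟩).trans (le_max_left _ _)⟩

end Main

theorem stmt1
    (n : ℕ) (hn : 1 ≤ n) (R : ℝ) (hR : 0 < R)
    (Ω : Set (EuclideanSpace ℝ (Fin n)))
    (hΩ : Ω = ball (0 : EuclideanSpace ℝ (Fin n)) R)
    (p : ℝ) (hp : 1 < p)
    (f : ℝ → ℝ)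
    (hf_nonneg : ∀ s ≥ (0:ℝ), 0 ≤ f s)
    (hf_C1 : ContDiffOn ℝ 1 f (Ici 0))
    (hf_C2 : ContDiffOn ℝ 2 f (Ici 0))
    (hf_conv : ConvexOn ℝ (Ici 0) f)
    (hf_lim : Tendsto (fun s : ℝ => s ^ (-p) * f s) atTop (nhds 1))
    (hf_deriv : ∃ C₀ > 0, ∀ s ≥ (0:ℝ), |deriv f s| ≤ C₀ * (1 + s ^ (p - 1)))
    (V : EuclideanSpace ℝ (Fin n) → ℝ)
    (hV_nonneg : ∀ x ∈ closure Ω, 0 ≤ V x)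
    (hV_holder : ∃ C β : ℝ, 0 < β ∧ β ≤ 1 ∧ 0 ≤ C ∧
      ∀ x ∈ closure Ω, ∀ y ∈ closure Ω, |V x - V y| ≤ C * ‖x - y‖ ^ β)
    (hV_rad : ∀ x ∈ closure Ω, ∀ y ∈ closure Ω, ‖x‖ = ‖y‖ → V x = V y)
    (T : ℝ) (hT : 0 < T)
    (u : ℝ → EuclideanSpace ℝ (Fin n) → ℝ)
    (hu_nonneg : ∀ t ∈ Ioo 0 T, ∀ x ∈ Ω, 0 ≤ u t x)
    (hu_t : ∀ t ∈ Ioo 0 T, ∀ x ∈ Ω, DifferentiableAt ℝ (fun s => u s x) t)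
    (hu_x : ∀ t ∈ Ioo 0 T, ∀ x ∈ Ω, ContDiffAt ℝ 2 (fun y => u t y) x)
    (heq : ∀ t ∈ Ioo 0 T, ∀ x ∈ Ω,
      deriv (fun s => u s x) t = lap (fun y => u t y) x + V x * f (u t x))
    (hmono : ∀ t ∈ Ioo 0 T, ∀ x ∈ Ω, 0 ≤ deriv (fun s => u s x) t)
    (hu_rad : ∀ t ∈ Ioo 0 T, ∀ x ∈ Ω, ∀ y ∈ Ω, ‖x‖ = ‖y‖ → u t x = u t y)
    (x₀ : EuclideanSpace ℝ (Fin n)) (hx₀ : x₀ ∈ Ω) (hVx₀ : V x₀ = 0)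
    (hcomp : connectedComponentIn {x ∈ closure Ω | V x = 0} x₀ ∩ frontier Ω = ∅)
    :
    ∃ r > 0, ∃ M > 0, ∀ t ∈ Ioo (T / 2) T, ∀ x ∈ Ω, ‖x - x₀‖ < r → u t x ≤ M := by
  obtain ⟨C, β, hβ, -, -, hV⟩ := hV_holder
  exact stmt1_general (isMonotoneSolution_of_deriv_eq_lap hu_nonneg hu_t hu_x heq hmono)
    (hΩ ▸ isOpen_ball) (hΩ ▸ (convex_ball 0 R).isPreconnected) (hΩ ▸ isBounded_ball) hT hp hf_conv
    hf_C1 hf_lim hV_nonneg hβ hV hx₀ hVx₀ hcomp
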